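/- arXiv:1903.00806 — 2 statements merged into one kernel-verified Lean document; each statement's English description precedes it below -/
import Mathlib

section
/- The 4-IET with flips T defined from λ = Qν (with ν the Perron probability eigenvector of P) is minimal: every forward orbit is dense in [0,|λ|]. -/
/-!
The piece lengths have the form `λ = (a, b + c, a + c, b)`, and the first return map of `T` to
`[0, 2a + b + c]` exchanges four consecutive intervals `A, B, C, D` of lengths `a, b, c, a` into the
order `C, D, A, B`, reversing `D` and `A`. Flipped Rauzy induction brings this return map back to
itself: on `[0, b - c]` it induces the exchange with lengths
`(u, v, w) = (a - b - c, 4b - 2a - c, 2c - b)`, and the first-return itineraries are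
`A ↦ ADABDAC`, `B ↦ ADBDABDAC`, `C ↦ ADBDABDACADBDAC`, `D ↦ ADBDABDADBDAC`,
whose letter counts are the columns of `P`. Since `(a, b, c, a)` is an eigenvector of `P` for `η`,
the induced map is a copy of the original one shrunk by `η⁻¹`. The towers over the small intervals
fill the large ones isometrically, so if all orbits are `r`-dense, then they are `r / η`-dense.
-/

open Set Filter Topology

section Orbits

variable {α β : Type*} {f : α → α} {g : β → β} {x y z : α}

/-- The forward orbit of `x` under `f` passes through `y` (possibly at time `0`). -/
def Reaches (f : α → α) (x y : α) : Prop := ∃ k : ℕ, f^[k] x = y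

theorem Reaches.refl (f : α → α) (x : α) : Reaches f x x := ⟨0, rfl⟩

theorem Reaches.of_eq (h : f x = y) : Reaches f x y := ⟨1, h⟩

theorem Reaches.trans (hxy : Reaches f x y) (hyz : Reaches f y z) : Reaches f x z := by
  obtain ⟨j, rfl⟩ := hxy
  obtain ⟨k, rfl⟩ := hyz
  exact ⟨k + j, Function.iterate_add_apply f k j x⟩

theorem Reaches.mem {O : Set α} (hxy : Reaches f x y) (hO : MapsTo f O O) (hx : x ∈ O) : y ∈ O := by
  obtain ⟨k, rfl⟩ := hxy
  exact hO.iterate k hx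

theorem mapsTo_setOf_reaches (f : α → α) (x : α) :
    MapsTo f {y | Reaches f x y} {y | Reaches f x y} :=
  fun _ hy => hy.trans (.of_eq rfl)

theorem Reaches.map {φ : α → β} {K : Set α} (hK : MapsTo f K K)
    (hφ : ∀ x ∈ K, Reaches g (φ x) (φ (f x))) (hx : x ∈ K) (hxy : Reaches f x y) :
    Reaches g (φ x) (φ y) := by
  obtain ⟨k, rfl⟩ := hxy
  induction k with
  | zero => exact .refl g _
  | succ k ih =>
    rw [Function.iterate_succ_apply']
    exact ih.trans (hφ _ (hK.iterate k hx))

end Orbits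

section Nets

variable {O O' : Set ℝ} {p q r s p' q' C κ x : ℝ}

/-- `O` is `r`-dense in `[p, q]`, with approximating points taken in the *open* interval `(p, q)`.
This keeps the property stable under maps that are isometric on `(p, q)` only. -/
def NetOn (O : Set ℝ) (r p q : ℝ) : Prop := ∀ t ∈ Icc p q, ∃ x ∈ O ∩ Ioo p q, |x - t| ≤ r

theorem NetOn.of_mem (hO : x ∈ O) (hx : x ∈ Ioo p q) (hr : q - p ≤ r) : NetOn O r p q :=
  fun t ht => ⟨x, ⟨hO, hx⟩, abs_le.2 ⟨by linarith [hx.1, ht.2], by linarith [hx.2, ht.1]⟩⟩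

theorem NetOn.mono (h : NetOn O r p q) (hO : O ⊆ O') : NetOn O' r p q := fun t ht =>
  let ⟨x, hx, hxt⟩ := h t ht
  ⟨x, ⟨hO hx.1, hx.2⟩, hxt⟩

theorem NetOn.glue (h : NetOn O r p q) (h' : NetOn O r q s) (hpq : p ≤ q) (hqs : q ≤ s) :
    NetOn O r p s := by
  intro t ht
  rcases le_total t q with htq | hqt
  · obtain ⟨x, ⟨hxO, hpx, hxq⟩, hxt⟩ := h t ⟨ht.1, htq⟩
    exact ⟨x, ⟨hxO, hpx, hxq.trans_le hqs⟩, hxt⟩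
  · obtain ⟨x, ⟨hxO, hqx, hxs⟩, hxt⟩ := h' t ⟨hqt, ht.2⟩
    exact ⟨x, ⟨hxO, hpq.trans_lt hqx, hxs⟩, hxt⟩

theorem NetOn.translate (h : NetOn O r p q) (hO : ∀ x ∈ O ∩ Ioo p q, x + C ∈ O)
    (hp : p' = p + C) (hq : q' = q + C) : NetOn O r p' q' := by
  subst hp hq
  intro t ht
  obtain ⟨x, hx, hxt⟩ := h (t - C) ⟨by linarith [ht.1], by linarith [ht.2]⟩
  refine ⟨x + C, ⟨hO x hx, by linarith [hx.2.1], by linarith [hx.2.2]⟩, ?_⟩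
  rwa [show x + C - t = x - (t - C) by ring]

theorem NetOn.reflect (h : NetOn O r p q) (hO : ∀ x ∈ O ∩ Ioo p q, C - x ∈ O)
    (hp : p' = C - q) (hq : q' = C - p) : NetOn O r p' q' := by
  subst hp hq
  intro t ht
  obtain ⟨x, hx, hxt⟩ := h (C - t) ⟨by linarith [ht.2], by linarith [ht.1]⟩
  refine ⟨C - x, ⟨hO x hx, by linarith [hx.2.2], by linarith [hx.2.1]⟩, ?_⟩
  rwa [show C - x - t = -(x - (C - t)) by ring, abs_neg]

theorem NetOn.mul_left (h : NetOn O r p q) (hκ : 0 < κ) (hO : ∀ x ∈ O, κ * x ∈ O') :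
    NetOn O' (κ * r) (κ * p) (κ * q) := by
  intro t ht
  obtain ⟨t, rfl⟩ : ∃ t', t = κ * t' := ⟨t / κ, by field_simp⟩
  obtain ⟨x, ⟨hxO, hpx, hxq⟩, hxt⟩ :=
    h t ⟨le_of_mul_le_mul_left ht.1 hκ, le_of_mul_le_mul_left ht.2 hκ⟩
  refine ⟨κ * x, ⟨hO x hxO, by gcongr, by gcongr⟩, ?_⟩
  rw [← mul_sub, abs_mul, abs_of_pos hκ]
  gcongr

theorem Icc_subset_closure_of_netOn {ρ : ℕ → ℝ} (hρ : Tendsto ρ atTop (𝓝 0))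
    (h : ∀ n, NetOn O (ρ n) p q) : Icc p q ⊆ closure O := by
  intro t ht
  rw [Metric.mem_closure_iff]
  intro ε hε
  obtain ⟨n, hn⟩ := (hρ.eventually_lt_const hε).exists
  obtain ⟨x, hx, hxt⟩ := h n t ht
  exact ⟨x, hx.1, by rw [dist_comm, Real.dist_eq]; exact hxt.trans_lt hn⟩

end Nets

section FlipIET

variable {a b c x κ : ℝ}

/-- The exchange of consecutive intervals `A, B, C, D` of lengths `a, b, c, a` into the order
`C, D, A, B`, with `A` and `D` reversed. The endpoint conventions `A = [0, a)`, `B = [a, a + b]`,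
`C = (a + b, a + b + c)`, `D = [a + b + c, 2a + b + c]` are those of the first return map of the
4-IET `T`, and they are reproduced by renormalization. -/
noncomputable def flipIET (a b c x : ℝ) : ℝ :=
  if x < a then 2 * a + c - x
  else if x ≤ a + b then x + (a + c)
  else if x < a + b + c then x - (a + b)
  else 2 * a + b + 2 * c - x

theorem flipIET_of_mem_A (hx : x < a) : flipIET a b c x = 2 * a + c - x := if_pos hx

theorem reaches_flipIET_of_mem_A (hx : x < a) :
    Reaches (flipIET a b c) x (2 * a + c - x) :=
  .of_eq (flipIET_of_mem_A hx)

theorem flipIET_of_mem_B (hx : a ≤ x) (hx' : x ≤ a + b) : flipIET a b c x = x + (a + c) := by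
  rw [flipIET, if_neg hx.not_gt, if_pos hx']

theorem flipIET_of_mem_C (hb : 0 ≤ b) (hx : a + b < x) (hx' : x < a + b + c) :
    flipIET a b c x = x - (a + b) := by
  rw [flipIET, if_neg (by linarith), if_neg hx.not_ge, if_pos hx']

theorem flipIET_of_mem_D (hb : 0 ≤ b) (hc : 0 < c) (hx : a + b + c ≤ x) :
    flipIET a b c x = 2 * a + b + 2 * c - x := by
  rw [flipIET, if_neg (by linarith), if_neg (by linarith), if_neg hx.not_gt]

theorem mapsTo_flipIET (ha : 0 ≤ a) (hb : 0 ≤ b) (hc : 0 ≤ c) :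
    MapsTo (flipIET a b c) (Icc 0 (2 * a + b + c)) (Icc 0 (2 * a + b + c)) := by
  rintro x ⟨hx, hx'⟩
  unfold flipIET
  split_ifs <;> constructor <;> linarith

theorem flipIET_mul (hκ : 0 < κ) (a b c x : ℝ) :
    flipIET (κ * a) (κ * b) (κ * c) (κ * x) = κ * flipIET a b c x := by
  simp only [flipIET, ← mul_add, mul_lt_mul_iff_right₀ hκ, mul_le_mul_iff_right₀ hκ]
  split_ifs <;> ring

end FlipIET

section Renormalization

variable {a b c x z : ℝ}

/-- The lengths `a - b - c`, `4b - 2a - c`, `2c - b` of the intervals exchanged by the map which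
`flipIET a b c` induces on `[0, b - c]` are positive. -/
structure Renormalizable (a b c : ℝ) : Prop where
  pos_A : 0 < a - b - c
  pos_B : 0 < 4 * b - 2 * a - c
  pos_C : 0 < 2 * c - b

namespace Renormalizable

theorem b_pos (h : Renormalizable a b c) : 0 < b := by linarith [h.pos_A, h.pos_B, h.pos_C]

theorem c_pos (h : Renormalizable a b c) : 0 < c := by linarith [h.pos_C, h.b_pos]

theorem c_lt_b (h : Renormalizable a b c) : c < b := by linarith [h.pos_A, h.pos_B, h.pos_C]

theorem reaches_BD (h : Renormalizable a b c) (hx : a ≤ x) (hx' : x ≤ a + b) :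
    Reaches (flipIET a b c) x (a + b + c - x) := by
  have hB : Reaches (flipIET a b c) x (x + (a + c)) := .of_eq (flipIET_of_mem_B hx hx')
  have hD := flipIET_of_mem_D h.b_pos.le h.c_pos
    (show a + b + c ≤ x + (a + c) by linarith [h.pos_A, h.c_pos])
  exact hB.trans (.of_eq (by rw [hD]; ring))

theorem reaches_AD (h : Renormalizable a b c) (hx : x ≤ a - b) :
    Reaches (flipIET a b c) x (x + (b + c)) := by
  have hD := flipIET_of_mem_D h.b_pos.le h.c_pos (show a + b + c ≤ 2 * a + c - x by linarith)
  exact (reaches_flipIET_of_mem_A (by linarith [h.b_pos])).trans (.of_eq (by rw [hD]; ring))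

theorem reaches_AC (h : Renormalizable a b c) (hx : a - b < x) (hx' : x < a - b + c) :
    Reaches (flipIET a b c) x (a - b + c - x) := by
  have hC := flipIET_of_mem_C h.b_pos.le (show a + b < 2 * a + c - x by linarith)
    (show 2 * a + c - x < a + b + c by linarith)
  have hA : x < a := by linarith [h.pos_A, h.pos_B, h.pos_C]
  exact (reaches_flipIET_of_mem_A hA).trans (.of_eq (by rw [hC]; ring))

theorem reaches_ABD (h : Renormalizable a b c) (hx : a - b + c ≤ x) (hx' : x < a) :
    Reaches (flipIET a b c) x (x - (a - b)) := by
  have hBD := h.reaches_BD (x := 2 * a + c - x) (by linarith [h.c_pos]) (by linarith)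
  convert (reaches_flipIET_of_mem_A hx').trans hBD using 1
  ring

theorem reaches_ADBD (h : Renormalizable a b c) (hx : a - b - c ≤ x) (hx' : x ≤ a - b) :
    Reaches (flipIET a b c) x (a - x) := by
  have hBD := h.reaches_BD (x := x + (b + c)) (by linarith)
    (by linarith [h.pos_A, h.pos_B, h.pos_C])
  convert (h.reaches_AD hx').trans hBD using 1
  ring

theorem reaches_ADABD (h : Renormalizable a b c) (hx : 0 ≤ x) (hx' : x < a - b - c) :
    Reaches (flipIET a b c) x (x + (2 * b + c - a)) := by
  have hABD := h.reaches_ABD (x := x + (b + c)) (by linarith [h.pos_A, h.pos_B, h.pos_C])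
    (by linarith)
  convert (h.reaches_AD (by linarith [h.c_pos])).trans hABD using 1
  ring

theorem reaches_ADBDABD (h : Renormalizable a b c) (hx : a - b - c ≤ x) (hx' : x ≤ b - c) :
    Reaches (flipIET a b c) x (b - x) := by
  have hABD := h.reaches_ABD (x := a - x) (by linarith) (by linarith [h.pos_A])
  convert (h.reaches_ADBD hx (by linarith [h.pos_A, h.pos_B, h.pos_C])).trans hABD using 1
  ring

theorem reaches_ADBDAC (h : Renormalizable a b c) (hx : b - c < x) (hx' : x ≤ a - b) :
    Reaches (flipIET a b c) x (x - (b - c)) := by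
  have hAC := h.reaches_AC (x := a - x) (by linarith [h.pos_A, h.pos_B, h.pos_C]) (by linarith)
  convert (h.reaches_ADBD (by linarith [h.pos_A, h.pos_B, h.pos_C]) hx').trans hAC using 1
  ring

theorem reaches_ADABDAC (h : Renormalizable a b c) (hx : 0 ≤ x) (hx' : x < a - b - c) :
    Reaches (flipIET a b c) x (2 * a - 3 * b - x) := by
  have hAC := h.reaches_AC (x := x + (2 * b + c - a)) (by linarith [h.pos_A, h.pos_B, h.pos_C])
    (by linarith [h.pos_A, h.pos_B, h.pos_C])
  convert (h.reaches_ADABD hx hx').trans hAC using 1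
  ring

theorem reaches_ADBDABDAC (h : Renormalizable a b c) (hx : a - b - c ≤ x) (hx' : x < 2 * b - a) :
    Reaches (flipIET a b c) x (x + (a + c - 2 * b)) := by
  have hAC := h.reaches_AC (x := b - x) (by linarith) (by linarith [h.pos_A, h.pos_B, h.pos_C])
  convert (h.reaches_ADBDABD hx (by linarith [h.pos_A])).trans hAC using 1
  ring

theorem reaches_ADBDABDADBDAC (h : Renormalizable a b c) (hx : 2 * b - a ≤ x) (hx' : x ≤ b - c) :
    Reaches (flipIET a b c) x (c - x) := by
  have hADBDAC := h.reaches_ADBDAC (x := b - x) (by linarith [h.pos_C]) (by linarith)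
  convert (h.reaches_ADBDABD (by linarith [h.pos_A, h.pos_B, h.pos_C]) hx').trans hADBDAC using 1
  ring

theorem reaches_ADBDABDACADBDAC (h : Renormalizable a b c) (hx : 3 * b - a - 2 * c < x)
    (hx' : x < 2 * b - a) : Reaches (flipIET a b c) x (x - (3 * b - a - 2 * c)) := by
  have hADBDAC := h.reaches_ADBDAC (x := x + (a + c - 2 * b)) (by linarith)
    (by linarith [h.pos_A, h.pos_B, h.pos_C])
  convert (h.reaches_ADBDABDAC (by linarith [h.pos_B]) hx').trans hADBDAC using 1
  ring

theorem reaches_renorm (h : Renormalizable a b c) (hx : 0 ≤ x) (hx' : x ≤ b - c) :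
    Reaches (flipIET a b c) x (flipIET (a - b - c) (4 * b - 2 * a - c) (2 * c - b) x) := by
  rcases lt_or_ge x (a - b - c) with hA | hA
  · rw [flipIET_of_mem_A hA]
    convert h.reaches_ADABDAC hx hA using 1
    ring
  rcases le_or_gt x (3 * b - a - 2 * c) with hB | hB
  · rw [flipIET_of_mem_B hA (by linarith)]
    convert h.reaches_ADBDABDAC hA (by linarith [h.pos_C]) using 1
    ring
  rcases lt_or_ge x (2 * b - a) with hC | hC
  · rw [flipIET_of_mem_C h.pos_B.le (by linarith) (by linarith)]
    convert h.reaches_ADBDABDACADBDAC hB hC using 1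
    ring
  · rw [flipIET_of_mem_D h.pos_B.le h.pos_C (by linarith)]
    convert h.reaches_ADBDABDADBDAC hC hx' using 1
    ring

theorem exists_reaches_le_a_add_b (h : Renormalizable a b c) (hx : x ∈ Icc 0 (2 * a + b + c)) :
    ∃ y ∈ Icc 0 (a + b), Reaches (flipIET a b c) x y := by
  obtain ⟨hx, hx'⟩ := hx
  have hb := h.b_pos
  have hc := h.c_pos
  have hcb := h.c_lt_b
  rcases le_or_gt x (a + b) with hAB | hAB
  · exact ⟨x, ⟨hx, hAB⟩, .refl _ x⟩
  rcases lt_or_ge x (a + b + c) with hC | hD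
  · exact ⟨x - (a + b), ⟨by linarith, by linarith⟩, .of_eq (flipIET_of_mem_C hb.le hAB hC)⟩
  · exact ⟨2 * a + b + 2 * c - x, ⟨by linarith, by linarith⟩, .of_eq (flipIET_of_mem_D hb.le hc hD)⟩

theorem exists_reaches_lt_a_sub_b_add_c (h : Renormalizable a b c) (hx : x ∈ Icc 0 (a + b)) :
    ∃ y ∈ Ico 0 (a - b + c), Reaches (flipIET a b c) x y := by
  have hu := h.pos_A
  have hv := h.pos_B
  have hw := h.pos_C
  have from_A : ∀ y ∈ Ico 0 a, ∃ z ∈ Ico 0 (a - b + c), Reaches (flipIET a b c) y z := by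
    rintro y ⟨hy, hya⟩
    rcases lt_or_ge y (a - b + c) with hlt | hge
    · exact ⟨y, ⟨hy, hlt⟩, .refl _ y⟩
    · exact ⟨y - (a - b), ⟨by linarith, by linarith⟩, h.reaches_ABD hge hya⟩
  rcases lt_or_ge x a with hA | hB
  · exact from_A x ⟨hx.1, hA⟩
  · obtain ⟨z, hz, hyz⟩ := from_A (a + b + c - x) ⟨by linarith [hx.2], by linarith⟩
    exact ⟨z, hz, (h.reaches_BD hB hx.2).trans hyz⟩

theorem exists_reaches_le_b_sub_c (h : Renormalizable a b c) (hx : x ∈ Ico 0 (a - b + c)) :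
    ∃ y ∈ Icc 0 (b - c), Reaches (flipIET a b c) x y := by
  have hu := h.pos_A
  have hv := h.pos_B
  have from_Icc : ∀ y ∈ Icc 0 (a - b), ∃ z ∈ Icc 0 (b - c), Reaches (flipIET a b c) y z := by
    rintro y ⟨hy, hyab⟩
    rcases le_or_gt y (b - c) with hle | hgt
    · exact ⟨y, ⟨hy, hle⟩, .refl _ y⟩
    · exact ⟨y - (b - c), ⟨by linarith, by linarith⟩, h.reaches_ADBDAC hgt hyab⟩
  rcases le_or_gt x (a - b) with hle | hgt
  · exact from_Icc x ⟨hx.1, hle⟩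
  · obtain ⟨z, hz, hyz⟩ := from_Icc (a - b + c - x) ⟨by linarith [hx.2], by linarith⟩
    exact ⟨z, hz, (h.reaches_AC hgt hx.2).trans hyz⟩

theorem exists_reaches_mem_Icc (h : Renormalizable a b c) (hx : x ∈ Icc 0 (2 * a + b + c)) :
    ∃ y ∈ Icc 0 (b - c), Reaches (flipIET a b c) x y := by
  obtain ⟨y, hy, hxy⟩ := h.exists_reaches_le_a_add_b hx
  obtain ⟨z, hz, hyz⟩ := h.exists_reaches_lt_a_sub_b_add_c hy
  obtain ⟨s, hs, hzs⟩ := h.exists_reaches_le_b_sub_c hz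
  exact ⟨s, hs, hxy.trans (hyz.trans hzs)⟩

end Renormalizable

end Renormalization

section PieceNets

variable {O O' : Set ℝ} {a b c r x z κ : ℝ}

/-- `O` is `r`-dense in each of the four intervals `A, B, C, D` exchanged by `flipIET a b c`. -/
structure PieceNet (O : Set ℝ) (r a b c : ℝ) : Prop where
  A : NetOn O r 0 a
  B : NetOn O r a (a + b)
  C : NetOn O r (a + b) (a + b + c)
  D : NetOn O r (a + b + c) (2 * a + b + c)

theorem PieceNet.mul_left (h : PieceNet O r a b c) (hκ : 0 < κ) (hO : ∀ x ∈ O, κ * x ∈ O') :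
    PieceNet O' (κ * r) (κ * a) (κ * b) (κ * c) where
  A := by simpa only [mul_zero] using h.A.mul_left hκ hO
  B := by simpa only [mul_add] using h.B.mul_left hκ hO
  C := by simpa only [mul_add] using h.C.mul_left hκ hO
  D := by simpa only [mul_add, mul_left_comm κ] using h.D.mul_left hκ hO

theorem Renormalizable.netOn_lt_a_sub_b_add_c (h : Renormalizable a b c)
    (hO : MapsTo (flipIET a b c) O O)
    (hn : PieceNet O r (a - b - c) (4 * b - 2 * a - c) (2 * c - b)) :
    NetOn O r (a - b - c) (b - c) ∧ NetOn O r (b - c) (a - b) ∧ NetOn O r (a - b) (a - b + c) := by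
  have hu := h.pos_A
  have hv := h.pos_B
  have hw := h.pos_C
  have net_BC : NetOn O r (a - b - c) (2 * b - a) := by
    convert hn.B.glue hn.C (by linarith) (by linarith) using 1
    ring
  have net_D : NetOn O r (2 * b - a) (b - c) := by
    convert hn.D using 1 <;> ring
  have net_right_C : NetOn O r (b - c) c :=
    hn.C.translate (C := a + c - 2 * b) (fun x hx =>
      (h.reaches_ADBDABDAC (by linarith [hx.2.1]) (by linarith [hx.2.2])).mem hO hx.1)
      (by ring) (by ring)
  have net_left_AB : NetOn O r c (a - b) :=
    net_D.reflect (fun x hx =>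
      (h.reaches_ADBDABD (by linarith [hx.2.1]) hx.2.2.le).mem hO hx.1) (by ring) (by ring)
  have net_ADBDAC : NetOn O r (b - c) (a - b) :=
    net_right_C.glue net_left_AB (by linarith) (by linarith)
  have net_AC_left : NetOn O r (a - b) (2 * b + c - a) :=
    net_BC.reflect (fun x hx =>
      (h.reaches_ADBDABD hx.2.1.le (by linarith [hx.2.2])).mem hO hx.1) (by ring) (by ring)
  have net_AC_mid : NetOn O r (2 * b + c - a) b :=
    hn.A.translate (fun x hx =>
      (h.reaches_ADABD hx.2.1.le hx.2.2).mem hO hx.1) (by ring) (by ring)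
  have net_AC_right : NetOn O r b (a - b + c) :=
    net_ADBDAC.reflect (fun x hx =>
      (h.reaches_ADBD (by linarith [hx.2.1]) hx.2.2.le).mem hO hx.1) (by ring) (by ring)
  refine ⟨net_BC.glue net_D (by linarith) (by linarith), net_ADBDAC, ?_⟩
  exact (net_AC_left.glue net_AC_mid (by linarith) (by linarith)).glue net_AC_right
    (by linarith) (by linarith)

theorem Renormalizable.pieceNet (h : Renormalizable a b c) (hO : MapsTo (flipIET a b c) O O)
    (hn : PieceNet O r (a - b - c) (4 * b - 2 * a - c) (2 * c - b)) : PieceNet O r a b c := by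
  obtain ⟨net_ADBDABD, net_ADBDAC, net_AC⟩ := h.netOn_lt_a_sub_b_add_c hO hn
  have hu := h.pos_A
  have hc := h.c_pos
  have hcb := h.c_lt_b
  have net_ADBD : NetOn O r (a - b - c) (a - b) :=
    net_ADBDABD.glue net_ADBDAC (by linarith [h.pos_B, h.pos_C])
      (by linarith [h.pos_B, h.pos_C])
  have net_AD : NetOn O r 0 (a - b) := hn.A.glue net_ADBD hu.le (by linarith)
  have net_ABD_left : NetOn O r (a - b + c) (b + c) :=
    net_ADBDABD.reflect (fun x hx =>
      (h.reaches_ADBD hx.2.1.le (by linarith [hx.2.2, h.pos_B, h.pos_C])).mem hO hx.1)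
      (by ring) (by ring)
  have net_ABD_right : NetOn O r (b + c) a :=
    hn.A.translate (fun x hx => (h.reaches_AD (by linarith [hx.2.2])).mem hO hx.1)
      (by ring) (by ring)
  have net_ABD : NetOn O r (a - b + c) a :=
    net_ABD_left.glue net_ABD_right (by linarith [h.pos_B, h.pos_C]) (by linarith)
  have net_B_left : NetOn O r a (a + c) :=
    net_ADBD.translate (fun x hx => (h.reaches_AD hx.2.2.le).mem hO hx.1) (by ring) (by ring)
  have net_B_right : NetOn O r (a + c) (a + b) :=
    net_ABD.reflect (fun x hx => (reaches_flipIET_of_mem_A hx.2.2).mem hO hx.1) (by ring) (by ring)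
  have net_B : NetOn O r a (a + b) := net_B_left.glue net_B_right (by linarith) (by linarith)
  have net_D_left : NetOn O r (a + b + c) (2 * a + c) :=
    net_AD.reflect (fun x hx => (reaches_flipIET_of_mem_A (by linarith [hx.2.2])).mem hO hx.1)
      (by ring) (by ring)
  have net_D_right : NetOn O r (2 * a + c) (2 * a + b + c) :=
    net_B.translate (fun x hx => (flipIET_of_mem_B hx.2.1.le hx.2.2.le) ▸ hO hx.1)
      (by ring) (by ring)
  exact
  { A := (net_AD.glue net_AC (by linarith) (by linarith)).glue net_ABD (by linarith) (by linarith)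
    B := net_B
    C := net_AC.reflect (fun x hx => (reaches_flipIET_of_mem_A (by linarith [hx.2.2])).mem hO hx.1)
      (by ring) (by ring)
    D := net_D_left.glue net_D_right (by linarith) (by linarith) }

theorem Renormalizable.exists_reaches_mem_C (h : Renormalizable a b c)
    (hx : x ∈ Icc 0 (b - c)) : ∃ y ∈ Ioo (a + b) (a + b + c), Reaches (flipIET a b c) x y := by
  obtain ⟨hx, hx'⟩ := hx
  have hu := h.pos_A
  have hv := h.pos_B
  have hw := h.pos_C
  suffices ∃ y ∈ Ioo (a - b) (a - b + c), Reaches (flipIET a b c) x y by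
    obtain ⟨y, ⟨hy, hy'⟩, hxy⟩ := this
    have hA := reaches_flipIET_of_mem_A (b := b) (c := c) (show y < a by linarith)
    exact ⟨2 * a + c - y, ⟨by linarith, by linarith⟩, hxy.trans hA⟩
  rcases lt_or_ge x (a - b - c) with hA | hA
  · exact ⟨x + (2 * b + c - a), ⟨by linarith, by linarith⟩, h.reaches_ADABD hx hA⟩
  have hADBDABD := h.reaches_ADBDABD hA hx'
  rcases lt_or_ge x (2 * b - a) with hBC | hD
  · exact ⟨b - x, ⟨by linarith, by linarith⟩, hADBDABD⟩
  · have hADBD := h.reaches_ADBD (x := b - x) (by linarith) (by linarith)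
    exact ⟨a - (b - x), ⟨by linarith, by linarith⟩, hADBDABD.trans hADBD⟩

theorem Renormalizable.exists_reaches_mem_B (h : Renormalizable a b c) (hx : x ∈ Ioo 0 c) :
    ∃ y ∈ Ioo a (a + b), Reaches (flipIET a b c) x y := by
  obtain ⟨hx, hxc⟩ := hx
  have hu := h.pos_A
  have hv := h.pos_B
  have hw := h.pos_C
  have hAD := h.reaches_AD (x := x) (by linarith)
  rcases lt_trichotomy x (a - b - c) with hlt | heq | hgt
  · have hA := reaches_flipIET_of_mem_A (a := a) (b := b) (c := c) (x := x + (b + c)) (by linarith)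
    exact ⟨2 * a + c - (x + (b + c)), ⟨by linarith, by linarith⟩, hAD.trans hA⟩
  · have hBD := h.reaches_BD (x := x + (b + c)) (by linarith) (by linarith)
    have hA := reaches_flipIET_of_mem_A (b := b) (c := c)
      (show a + b + c - (x + (b + c)) < a by linarith)
    exact ⟨2 * a + c - (a + b + c - (x + (b + c))), ⟨by linarith, by linarith⟩,
      hAD.trans (hBD.trans hA)⟩
  · exact ⟨x + (b + c), ⟨by linarith, by linarith⟩, hAD⟩

theorem Renormalizable.pieceNet_orbit (h : Renormalizable a b c)
    (hz : z ∈ Icc 0 (2 * a + b + c)) :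
    PieceNet {y | Reaches (flipIET a b c) z y} (2 * a + b + c) a b c := by
  have hu := h.pos_A
  have hb := h.b_pos
  have hc := h.c_pos
  obtain ⟨x, hx, hzx⟩ := h.exists_reaches_mem_Icc hz
  obtain ⟨y, hyC, hxy⟩ := h.exists_reaches_mem_C hx
  have hzy := hzx.trans hxy
  have hy0 : y - (a + b) ∈ Ioo 0 c := ⟨by linarith [hyC.1], by linarith [hyC.2]⟩
  have hz0 : Reaches (flipIET a b c) z (y - (a + b)) :=
    hzy.trans (.of_eq (flipIET_of_mem_C hb.le hyC.1 hyC.2))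
  have hzD := hz0.trans (reaches_flipIET_of_mem_A (by linarith [hy0.2]))
  obtain ⟨s, hsB, hys⟩ := h.exists_reaches_mem_B hy0
  exact
  { A := .of_mem hz0 ⟨hy0.1, by linarith [hy0.2]⟩ (by linarith)
    B := .of_mem (hz0.trans hys) hsB (by linarith)
    C := .of_mem hzy hyC (by linarith)
    D := .of_mem hzD ⟨by linarith [hy0.2], by linarith [hy0.1]⟩ (by linarith) }

end PieceNets

section SelfSimilarity

variable {κ a b c x y z : ℝ}

/-- The exchange induced by `flipIET a b c` on `[0, b - c]` is its copy scaled by `κ`; equivalently,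
`(a, b, c, a)` is a positive eigenvector of `P` for the eigenvalue `κ⁻¹`. -/
structure SelfSimilar (κ a b c : ℝ) : Prop where
  κ_pos : 0 < κ
  a_pos : 0 < a
  b_pos : 0 < b
  c_pos : 0 < c
  eq_A : a - b - c = κ * a
  eq_B : 4 * b - 2 * a - c = κ * b
  eq_C : 2 * c - b = κ * c

namespace SelfSimilar

theorem renormalizable (h : SelfSimilar κ a b c) : Renormalizable a b c where
  pos_A := h.eq_A ▸ mul_pos h.κ_pos h.a_pos
  pos_B := h.eq_B ▸ mul_pos h.κ_pos h.b_pos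
  pos_C := h.eq_C ▸ mul_pos h.κ_pos h.c_pos

theorem κ_lt_one (h : SelfSimilar κ a b c) : κ < 1 := by
  refine lt_of_mul_lt_mul_right ?_ h.a_pos.le
  linarith [h.eq_A, h.b_pos, h.c_pos]

theorem κ_mul_length (h : SelfSimilar κ a b c) : κ * (2 * a + b + c) = b - c := by
  linear_combination -2 * h.eq_A - h.eq_B - h.eq_C

theorem reaches_mul (h : SelfSimilar κ a b c) (hx : x ∈ Icc 0 (2 * a + b + c))
    (hxy : Reaches (flipIET a b c) x y) : Reaches (flipIET a b c) (κ * x) (κ * y) := by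
  refine hxy.map (mapsTo_flipIET h.a_pos.le h.b_pos.le h.c_pos.le) (fun s hs => ?_) hx
  have hκs : κ * s ≤ b - c := h.κ_mul_length ▸ mul_le_mul_of_nonneg_left hs.2 h.κ_pos.le
  have := h.renormalizable.reaches_renorm (mul_nonneg h.κ_pos.le hs.1) hκs
  rwa [h.eq_A, h.eq_B, h.eq_C, flipIET_mul h.κ_pos] at this

theorem pieceNet_orbit (h : SelfSimilar κ a b c) (n : ℕ) (hz : z ∈ Icc 0 (2 * a + b + c)) :
    PieceNet {y | Reaches (flipIET a b c) z y} (κ ^ n * (2 * a + b + c)) a b c := by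
  induction n generalizing z with
  | zero => simpa only [pow_zero, one_mul] using h.renormalizable.pieceNet_orbit hz
  | succ n ih =>
    obtain ⟨y, hy, hzy⟩ := h.renormalizable.exists_reaches_mem_Icc hz
    obtain ⟨x, rfl⟩ : ∃ x, y = κ * x := ⟨y / κ, by field_simp [h.κ_pos.ne']⟩
    have hx : x ∈ Icc 0 (2 * a + b + c) :=
      ⟨nonneg_of_mul_nonneg_right hy.1 h.κ_pos,
        le_of_mul_le_mul_left (h.κ_mul_length ▸ hy.2) h.κ_pos⟩
    have hsmall := (ih hx).mul_left (O' := {y | Reaches (flipIET a b c) z y}) h.κ_pos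
      fun s hs => hzy.trans (h.reaches_mul hx hs)
    rw [← h.eq_A, ← h.eq_B, ← h.eq_C, ← mul_assoc, ← pow_succ'] at hsmall
    exact h.renormalizable.pieceNet (mapsTo_setOf_reaches _ z) hsmall

end SelfSimilar

end SelfSimilarity

section FourIET

variable {κ a b c l₁ l₂ l₃ l₄ x z : ℝ}

/-- The 4-IET `T` with piece lengths `l₁, l₂, l₃, l₄`, all four pieces being reversed. -/
noncomputable def fourIET (l₁ l₂ l₃ l₄ x : ℝ) : ℝ :=
  if x < l₁ then -x + l₁ + l₃
  else if x < l₁ + l₂ then -x + l₁ + (l₁ + l₂ + l₃ + l₄)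
  else if x < l₁ + l₂ + l₃ then -x + l₁ + l₂ + l₃
  else -x + l₁ + l₃ + (l₁ + l₂ + l₃ + l₄)

theorem fourIET_of_mem_first (hx : x < l₁) : fourIET l₁ l₂ l₃ l₄ x = l₁ + l₃ - x := by
  rw [fourIET, if_pos hx]
  ring

theorem fourIET_of_mem_second (hx : l₁ ≤ x) (hx' : x < l₁ + l₂) :
    fourIET l₁ l₂ l₃ l₄ x = 2 * l₁ + l₂ + l₃ + l₄ - x := by
  rw [fourIET, if_neg hx.not_gt, if_pos hx']
  ring

theorem fourIET_of_mem_third (h₂ : 0 ≤ l₂) (hx : l₁ + l₂ ≤ x) (hx' : x < l₁ + l₂ + l₃) :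
    fourIET l₁ l₂ l₃ l₄ x = l₁ + l₂ + l₃ - x := by
  rw [fourIET, if_neg (by linarith), if_neg hx.not_gt, if_pos hx']
  ring

theorem fourIET_of_mem_fourth (h₂ : 0 ≤ l₂) (h₃ : 0 ≤ l₃) (hx : l₁ + l₂ + l₃ ≤ x) :
    fourIET l₁ l₂ l₃ l₄ x = 2 * l₁ + l₂ + 2 * l₃ + l₄ - x := by
  rw [fourIET, if_neg (by linarith), if_neg (by linarith), if_neg hx.not_gt]
  ring

theorem reaches_fourIET_flipIET (ha : 0 < a) (hb : 0 < b) (hc : 0 < c)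
    (hx : x ∈ Icc 0 (2 * a + b + c)) :
    Reaches (fourIET a (b + c) (a + c) b) x (flipIET a b c x) := by
  have hbc : 0 ≤ b + c := by linarith
  rcases lt_or_ge x a with hA | hA
  · refine .of_eq ?_
    rw [fourIET_of_mem_first hA, flipIET_of_mem_A hA]
    ring
  rcases le_or_gt x (a + b) with hB | hB
  · have h₂ := fourIET_of_mem_second (l₃ := a + c) (l₄ := b) hA
      (show x < a + (b + c) by linarith)
    refine (Reaches.of_eq h₂).trans (.of_eq ?_)
    rw [fourIET_of_mem_fourth hbc (by linarith) (by linarith), flipIET_of_mem_B hA hB]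
    ring
  rcases lt_or_ge x (a + b + c) with hC | hC
  · have h₂ := fourIET_of_mem_second (l₃ := a + c) (l₄ := b) hA
      (show x < a + (b + c) by linarith)
    refine (Reaches.of_eq h₂).trans (.of_eq ?_)
    rw [fourIET_of_mem_third hbc (by linarith) (by linarith), flipIET_of_mem_C hb.le hB hC]
    ring
  · refine .of_eq ?_
    rw [fourIET_of_mem_third hbc (by linarith) (by linarith [hx.2]), flipIET_of_mem_D hb.le hc hC]
    ring

theorem exists_reaches_fourIET_mem_Icc (ha : 0 < a) (hb : 0 < b) (hc : 0 < c)
    (hx : x ∈ Icc 0 (2 * (a + b + c))) :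
    ∃ y ∈ Icc 0 (2 * a + b + c), Reaches (fourIET a (b + c) (a + c) b) x y := by
  obtain ⟨hx, hx'⟩ := hx
  rcases le_or_gt x (2 * a + b + c) with hle | hgt
  · exact ⟨x, ⟨hx, hle⟩, .refl _ x⟩
  have hbc : 0 ≤ b + c := by linarith
  rcases lt_or_ge x (a + (b + c) + (a + c)) with h₃ | h₄
  · exact ⟨_, ⟨by linarith, by linarith⟩, .of_eq (fourIET_of_mem_third hbc (by linarith) h₃)⟩
  · exact ⟨_, ⟨by linarith, by linarith⟩, .of_eq (fourIET_of_mem_fourth hbc (by linarith) h₄)⟩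

theorem SelfSimilar.netOn_fourIET_orbit (h : SelfSimilar κ a b c)
    (hz : z ∈ Icc 0 (2 * (a + b + c))) (n : ℕ) :
    NetOn {y | Reaches (fourIET a (b + c) (a + c) b) z y} (κ ^ n * (2 * a + b + c))
      0 (2 * (a + b + c)) := by
  have ha := h.a_pos
  have hb := h.b_pos
  have hc := h.c_pos
  obtain ⟨x, hx, hzx⟩ := exists_reaches_fourIET_mem_Icc ha hb hc hz
  have orbit_subset : {y | Reaches (flipIET a b c) x y} ⊆
      {y | Reaches (fourIET a (b + c) (a + c) b) z y} := fun y hxy =>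
    hzx.trans (hxy.map (φ := id) (mapsTo_flipIET ha.le hb.le hc.le)
      (fun s hs => reaches_fourIET_flipIET ha hb hc hs) hx)
  obtain ⟨net_A, net_B, net_C, net_D⟩ := h.pieceNet_orbit n hx
  have net_BC := (net_B.glue net_C (by linarith) (by linarith)).mono orbit_subset
  have net_low := ((net_A.mono orbit_subset).glue net_BC ha.le (by linarith)).glue
    (net_D.mono orbit_subset) (by linarith) (by linarith)
  have net_high : NetOn {y | Reaches (fourIET a (b + c) (a + c) b) z y} (κ ^ n * (2 * a + b + c))
      (2 * a + b + c) (2 * (a + b + c)) :=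
    net_BC.reflect (C := 2 * a + (b + c) + (a + c) + b) (fun s hs => Reaches.trans hs.1
      (.of_eq (fourIET_of_mem_second hs.2.1.le (by linarith [hs.2.2])))) (by ring) (by ring)
  exact net_low.glue net_high (by linarith) (by linarith)

theorem SelfSimilar.Icc_subset_closure_fourIET_orbit (h : SelfSimilar κ a b c)
    (hz : z ∈ Icc 0 (2 * (a + b + c))) :
    Icc 0 (2 * (a + b + c)) ⊆ closure {y | Reaches (fourIET a (b + c) (a + c) b) z y} := by
  refine Icc_subset_closure_of_netOn ?_ (h.netOn_fourIET_orbit hz)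
  simpa only [zero_mul] using
    (tendsto_pow_atTop_nhds_zero_of_lt_one h.κ_pos.le h.κ_lt_one).mul_const (2 * a + b + c)

end FourIET

theorem perron_root_mem_Ioo {η : ℝ} (hη : η ^ 3 - 11 * η ^ 2 + 7 * η - 1 = 0) (hη10 : 10 < η) :
    η ∈ Ioo 10.33 10.34 := by
  constructor
  · by_contra! hle
    nlinarith [mul_nonneg (sub_nonneg.2 hη10.le) (sub_nonneg.2 hle),
      mul_nonneg (mul_nonneg (by linarith : 0 ≤ η) (sub_nonneg.2 hη10.le)) (sub_nonneg.2 hle)]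
  · by_contra! hge
    nlinarith [mul_nonneg (by linarith : 0 ≤ η) (sub_nonneg.2 hge),
      mul_nonneg (mul_self_nonneg η) (sub_nonneg.2 hge)]

theorem selfSimilar_of_perron_root {η : ℝ} (hη : η ^ 3 - 11 * η ^ 2 + 7 * η - 1 = 0)
    (hη10 : 10 < η) :
    SelfSimilar η⁻¹ ((-3 * η ^ 2 + 32 * η - 9) / 4) ((5 * η ^ 2 - 54 * η + 25) / 4)
      ((η ^ 2 - 10 * η - 3) / 4) := by
  obtain ⟨hlow, hhigh⟩ := perron_root_mem_Ioo hη hη10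
  have hη0 : 0 < η := by linarith
  refine ⟨inv_pos.2 hη0, by nlinarith, by nlinarith, by nlinarith, ?_, ?_, ?_⟩
  all_goals rw [eq_inv_mul_iff_mul_eq₀ hη0.ne']
  · linear_combination (-9 / 4) * hη
  · linear_combination (25 / 4) * hη
  · linear_combination (-3 / 4) * hη

/-- Theorem 2.1 (minimality part): the 4-IET with flips `T` built from
`λ = Qν` is minimal: every forward orbit is dense in `[0, |λ|]`. -/
theorem T_minimal
    (η : ℝ) (hη : η ^ 3 - 11 * η ^ 2 + 7 * η - 1 = 0) (hη10 : 10 < η) :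
    let l1 : ℝ := (-3 * η ^ 2 + 32 * η - 9) / 4
    let l2 : ℝ := (6 * η ^ 2 - 64 * η + 22) / 4
    let l3 : ℝ := (-2 * η ^ 2 + 22 * η - 12) / 4
    let l4 : ℝ := (5 * η ^ 2 - 54 * η + 25) / 4
    let L : ℝ := l1 + l2 + l3 + l4
    let T : ℝ → ℝ := fun x =>
      if x < l1 then -x + l1 + l3
      else if x < l1 + l2 then -x + l1 + L
      else if x < l1 + l2 + l3 then -x + l1 + l2 + l3
      else -x + l1 + l3 + L
    ∀ z ∈ Set.Icc (0:ℝ) L,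
      Set.Icc (0:ℝ) L ⊆ closure {w | ∃ k : ℕ, T^[k] z = w} := by
  intro l1 l2 l3 l4 L T z hz
  let c : ℝ := (η ^ 2 - 10 * η - 3) / 4
  have hself : SelfSimilar η⁻¹ l1 l4 c := selfSimilar_of_perron_root hη hη10
  have hl2 : l2 = l4 + c := by ring
  have hl3 : l3 = l1 + c := by ring
  have hL : L = 2 * (l1 + l4 + c) := by ring
  have hT : T = fourIET l1 (l4 + c) (l1 + c) l4 := by
    rw [← hl2, ← hl3]
    rfl
  rw [hT]
  rw [hL] at hz ⊢
  exact hself.Icc_subset_closure_fourIET_orbit hz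
end

section
/- The 4-IET with flips T defined from λ = Qν is uniquely ergodic: the normalized Lebesgue measure on [0,|λ|] is the only T-invariant Borel probability measure. -/
open MeasureTheory

open Filter Set Topology ProbabilityTheory

/-!
Let `F` be the distribution function of an invariant probability measure, symmetrized at its jumps.
Every branch of `T` is an isometry, so it carries a piece of the graph of `F` onto another piece by
an affine map. Composing branches gives such symmetries for the map induced on `(0, 2 * a + b + c)`,
an exchange of intervals of lengths `a, b, c, a`, and then for its first return map to a shorter
interval, which is the same exchange scaled by `θ = η⁻¹`. Each renormalization multiplies the
lengths by `θ` and transforms the masses of the four intervals by an integer matrix. Since `F` tends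
to `0` at `0`, the masses after `n` renormalizations tend to `0`, and `7 θ < 1` then forces the
original masses to be proportional to the lengths, say with ratio `κ`. The difference `F x - κ * x`
is invariant up to sign and small near `0`; the return words carry this smallness from the short
interval to the whole one, so `F x = κ * x`.
-/

theorem abs_le_of_monotone_add {G g : ℝ → ℝ} {s e t K : ℝ} (hG : Monotone (G + g))
    (hg : Continuous g) (hs : s < e) (ht : e < t) (hl : ∀ x ∈ Ioo s e, |G x| ≤ K)
    (hr : ∀ x ∈ Ioo e t, |G x| ≤ K) : |G e| ≤ K := by
  have hg' (l : Filter ℝ) (hle : l ≤ 𝓝 e) (K : ℝ) : Tendsto (fun x ↦ K + g x) l (𝓝 (K + g e)) :=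
    ((hg.tendsto e).mono_left hle).const_add K
  refine abs_le.2 ⟨?_, ?_⟩
  · suffices -K + g e ≤ G e + g e by linarith
    refine le_of_tendsto (hg' _ (nhdsWithin_le_nhds (s := Iio e)) _) ?_
    filter_upwards [Ioo_mem_nhdsLT hs] with x hx
    linarith [hG hx.2.le, (abs_le.1 (hl x hx)).1, Pi.add_apply G g x, Pi.add_apply G g e]
  · suffices G e + g e ≤ K + g e by linarith
    refine ge_of_tendsto (hg' _ (nhdsWithin_le_nhds (s := Ioi e)) _) ?_
    filter_upwards [Ioo_mem_nhdsGT ht] with x hx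
    linarith [hG hx.1.le, (abs_le.1 (hr x hx)).2, Pi.add_apply G g x, Pi.add_apply G g e]

/-- The affine map `(x, y) ↦ (σ x + d, σ y + m)` carries the part of the graph of `F` over `(s, t)`
into the graph of `F`. Here `σ = 1` describes translations and `σ = -1` flips. -/
def LocalSymm (F : ℝ → ℝ) (s t σ d m : ℝ) : Prop :=
  ∀ x ∈ Ioo s t, F (σ * x + d) = σ * F x + m

namespace LocalSymm

variable {F : ℝ → ℝ} {s t σ d m : ℝ}

theorem comp {s₁ t₁ σ₁ d₁ m₁ s₂ t₂ σ₂ d₂ m₂ : ℝ}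
    (h₂ : LocalSymm F s₂ t₂ σ₂ d₂ m₂) (h₁ : LocalSymm F s₁ t₁ σ₁ d₁ m₁)
    (maps : ∀ x, s < x → x < t → (s₁ < x ∧ x < t₁) ∧ s₂ < σ₁ * x + d₁ ∧ σ₁ * x + d₁ < t₂ := by
      intro x hs ht; refine ⟨⟨?_, ?_⟩, ?_, ?_⟩ <;> linarith)
    (hσ : σ = σ₂ * σ₁ := by norm_num) (hd : d = σ₂ * d₁ + d₂ := by ring)
    (hm : m = σ₂ * m₁ + m₂ := by ring) : LocalSymm F s t σ d m := by
  rintro x ⟨hs, ht⟩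
  obtain ⟨hx₁, hx₂⟩ := maps x hs ht
  calc F (σ * x + d) = F (σ₂ * (σ₁ * x + d₁) + d₂) := by rw [hσ, hd]; ring_nf
    _ = σ * F x + m := by rw [h₂ _ hx₂, h₁ x hx₁, hσ, hm]; ring

theorem sub_mul (h : LocalSymm F s t σ d m) (κ : ℝ) :
    LocalSymm (fun x ↦ F x - κ * x) s t σ d (m - κ * d) := by
  intro x hx
  linear_combination h x hx

theorem mono {s' t' : ℝ} (h : LocalSymm F s t σ d m) (hs : s ≤ s') (ht : t' ≤ t) :
    LocalSymm F s' t' σ d m :=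
  fun x hx ↦ h x (Ioo_subset_Ioo hs ht hx)

theorem abs_le {K : ℝ} {x : ℝ} (h : LocalSymm F s t σ d m) (hσ : |σ| = 1) (hx : x ∈ Ioo s t)
    (hF : |F x| ≤ K) (hF' : |F (σ * x + d)| ≤ K) : |m| ≤ 2 * K := by
  have hσF : |σ * F x| ≤ K := by rwa [abs_mul, hσ, one_mul]
  calc |m| = |F (σ * x + d) - σ * F x| := by rw [h x hx]; ring_nf
    _ ≤ |F (σ * x + d)| + |σ * F x| := abs_sub _ _
    _ ≤ 2 * K := by linarith

theorem flip_symm (h : LocalSymm F s t (-1) d m) :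
    LocalSymm F (d - t) (d - s) (-1) d m := by
  rintro x ⟨hs, ht⟩
  have := h (-1 * x + d) ⟨by linarith, by linarith⟩
  rw [show -1 * (-1 * x + d) + d = x by ring] at this
  linarith

theorem eq_mul_extend {e κ : ℝ} (h : LocalSymm F s t (-1) d m)
    (hF : ∀ x ∈ Ioo 0 e, F x = κ * x) (hs : 0 ≤ s) (hse : s < e) (het : e ≤ t) (htd : t ≤ d)
    (hds : d - s ≤ e) : ∀ x ∈ Ioo 0 t, F x = κ * x := by
  have eq_sub (x : ℝ) (hx : x ∈ Ioo s t) : F x = κ * x + (m - κ * d) := by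
    have := h x hx
    rw [hF _ ⟨by linarith [hx.2], by linarith [hx.1]⟩] at this
    linear_combination this
  have hm : m - κ * d = 0 := by
    have := eq_sub ((s + e) / 2) ⟨by linarith, by linarith⟩
    rwa [hF _ ⟨by linarith, by linarith⟩, left_eq_add] at this
  rintro x ⟨hx, hxt⟩
  rcases lt_or_ge x e with hxe | hxe
  · exact hF x ⟨hx, hxe⟩
  · rw [eq_sub x ⟨by linarith, hxt⟩, hm, add_zero]

theorem abs_le_extend {g : ℝ → ℝ} {e e' K : ℝ} (h : LocalSymm F e e' σ d 0)
    (hσ : |σ| = 1) (hF : Monotone (F + g)) (hg : Continuous g) (he : 0 < e) (he' : e < e')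
    (hK : ∀ x ∈ Ioo 0 e, |F x| ≤ K)
    (maps : ∀ x, e < x → x < e' → 0 < σ * x + d ∧ σ * x + d < e := by
      intro x hs ht; constructor <;> linarith) :
    ∀ x ∈ Ioo 0 e', |F x| ≤ K := by
  have hr : ∀ x ∈ Ioo e e', |F x| ≤ K := fun x hx ↦ by
    simpa [h x hx, abs_mul, hσ] using hK _ (maps x hx.1 hx.2)
  rintro x ⟨h0, hx⟩
  rcases lt_trichotomy x e with hlt | rfl | hgt
  · exact hK x ⟨h0, hlt⟩
  · exact abs_le_of_monotone_add hF hg he he' hK hr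
  · exact hr x ⟨hgt, hx⟩

end LocalSymm

/-- The local symmetries of the distribution function of an invariant measure of the 4-interval
exchange with flips induced on `(0, 2 * a + b + c)`: the consecutive intervals, of lengths
`a, b, c, a` and masses `α, β, γ, δ`, are flipped, translated, translated and flipped. -/
structure IsExchangeSolution (a b c α β γ δ : ℝ) (F : ℝ → ℝ) : Prop where
  symm_A : LocalSymm F 0 a (-1) (2 * a + c) (α + γ + δ)
  symm_B : LocalSymm F a (a + b) 1 (a + c) (γ + δ)
  symm_C : LocalSymm F (a + b) (a + b + c) 1 (-(a + b)) (-(α + β))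
  symm_D : LocalSymm F (a + b + c) (2 * a + b + c) (-1) (2 * a + b + 2 * c) (α + β + 2 * γ + δ)

/-- The exchange with lengths `a, b, c, a` renormalizes to the one with lengths `p, q, r, p`, its
first return map to `(0, 2 * p + q + r)`. The coefficients count the visits of the return words
to each interval. -/
structure RenormalizesTo (a b c p q r : ℝ) : Prop where
  pos_p : 0 < p
  pos_q : 0 < q
  pos_r : 0 < r
  eq_a : a = 7 * p + 3 * q + 5 * r
  eq_b : b = 4 * p + 2 * q + 3 * r
  eq_c : c = 2 * p + q + 2 * r

namespace IsExchangeSolution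

variable {a b c p q r α β γ δ : ℝ} {F : ℝ → ℝ}

theorem sub_mul {κ : ℝ} (S : IsExchangeSolution a b c (κ * a) (κ * b) (κ * c) (κ * a) F) :
    IsExchangeSolution a b c 0 0 0 0 (fun x ↦ F x - κ * x) where
  symm_A := by convert! S.symm_A.sub_mul κ using 1; ring
  symm_B := by convert! S.symm_B.sub_mul κ using 1; ring
  symm_C := by convert! S.symm_C.sub_mul κ using 1; ring
  symm_D := by convert! S.symm_D.sub_mul κ using 1; ring

section Words

-- In `symm_XY` the word `XY` stands for the composition `X ∘ Y`: the branch `Y` acts first.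

variable (S : IsExchangeSolution a b c α β γ δ F) (R : RenormalizesTo a b c p q r)

include S R

theorem symm_DB : LocalSymm F a (a + b) (-1) (a + b + c) (α + β + γ) := by
  obtain ⟨hp, hq, hr, rfl, rfl, rfl⟩ := R
  exact S.symm_D.comp S.symm_B

theorem symm_DA : LocalSymm F 0 (a - b) 1 (b + c) (β + γ) := by
  obtain ⟨hp, hq, hr, rfl, rfl, rfl⟩ := R
  exact S.symm_D.comp S.symm_A

theorem symm_CA : LocalSymm F (a - b) (a - b + c) (-1) (a - b + c) (γ + δ - β) := by
  obtain ⟨hp, hq, hr, rfl, rfl, rfl⟩ := R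
  exact S.symm_C.comp S.symm_A

theorem symm_DBA : LocalSymm F (a - b + c) a 1 (b - a) (β - δ) := by
  have hDB := S.symm_DB R
  obtain ⟨hp, hq, hr, rfl, rfl, rfl⟩ := R
  exact hDB.comp S.symm_A

theorem symm_DBDA : LocalSymm F p (a - b) (-1) a α := by
  have hDB := S.symm_DB R
  have hDA := S.symm_DA R
  obtain ⟨hp, hq, hr, rfl, rfl, rfl⟩ := R
  exact hDB.comp hDA

theorem symm_DBADA : LocalSymm F 0 p 1 (2 * b + c - a) (2 * β + γ - δ) := by
  have hDBA := S.symm_DBA R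
  have hDA := S.symm_DA R
  obtain ⟨_, hq, hr, rfl, rfl, rfl⟩ := R
  exact hDBA.comp hDA

theorem symm_DBADBDA : LocalSymm F p (2 * p + q + r) (-1) b (α + β - δ) := by
  have hDBA := S.symm_DBA R
  have hDBDA := S.symm_DBDA R
  obtain ⟨hp, _, hr, rfl, rfl, rfl⟩ := R
  exact hDBA.comp hDBDA

theorem symm_CADBDA : LocalSymm F (2 * p + q + r) (a - b) 1 (c - b) (γ + δ - α - β) := by
  have hCA := S.symm_CA R
  have hDBDA := S.symm_DBDA R
  obtain ⟨hp, hq, hr, rfl, rfl, rfl⟩ := R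
  exact hCA.comp hDBDA

theorem symm_CADBADBDA : LocalSymm F p (p + q + r) 1 (a - 2 * b + c) (γ + 2 * δ - α - 2 * β) := by
  have hCA := S.symm_CA R
  have hDBADBDA := S.symm_DBADBDA R
  obtain ⟨hp, _, hr, rfl, rfl, rfl⟩ := R
  exact hCA.comp hDBADBDA

theorem renormalize :
    IsExchangeSolution p q r (α - β - γ) (α + 4 * β - γ - 3 * δ) (2 * γ + δ - α - β) (δ - β - γ)
      F := by
  have hCA := S.symm_CA R
  have hDBADA := S.symm_DBADA R
  have hDBADBDA := S.symm_DBADBDA R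
  have hCADBDA := S.symm_CADBDA R
  have hCADBADBDA := S.symm_CADBADBDA R
  obtain ⟨hp, hq, hr, rfl, rfl, rfl⟩ := R
  constructor
  · exact hCA.comp hDBADA
  · convert hCADBADBDA.mono le_rfl (by linarith : p + q ≤ p + q + r) using 1 <;> ring
  · exact hCADBDA.comp hCADBADBDA
  · exact hCADBDA.comp hDBADBDA

end Words

theorem abs_masses_le (S : IsExchangeSolution a b c α β γ δ F) (ha : 0 < a) (hb : 0 < b)
    (hc : 0 < c) {K : ℝ} (hF : ∀ x ∈ Ioo 0 (2 * a + b + c), |F x| ≤ K) :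
    |α| ≤ 8 * K ∧ |β| ≤ 8 * K ∧ |γ| ≤ 8 * K ∧ |δ| ≤ 8 * K := by
  have bound {s t σ d m : ℝ} (h : LocalSymm F s t σ d m) (hσ : |σ| = 1) (hst : s < t) (hs : 0 ≤ s)
      (ht : t ≤ 2 * a + b + c) (hd : 0 < σ * ((s + t) / 2) + d)
      (hd' : σ * ((s + t) / 2) + d < 2 * a + b + c) : |m| ≤ 2 * K :=
    h.abs_le hσ ⟨by linarith, by linarith⟩ (hF ((s + t) / 2) ⟨by linarith, by linarith⟩)
      (hF _ ⟨hd, hd'⟩)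
  have hA : |α + γ + δ| ≤ 2 * K := by apply bound S.symm_A (by norm_num) <;> linarith
  have hB : |γ + δ| ≤ 2 * K := by apply bound S.symm_B (by norm_num) <;> linarith
  have hC : |-(α + β)| ≤ 2 * K := by apply bound S.symm_C (by norm_num) <;> linarith
  have hD : |α + β + 2 * γ + δ| ≤ 2 * K := by apply bound S.symm_D (by norm_num) <;> linarith
  simp only [abs_le] at *
  refine ⟨⟨?_, ?_⟩, ⟨?_, ?_⟩, ⟨?_, ?_⟩, ⟨?_, ?_⟩⟩ <;> linarith

theorem abs_le_of_renormalizesTo {g : ℝ → ℝ} {K : ℝ} (S : IsExchangeSolution a b c 0 0 0 0 F)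
    (R : RenormalizesTo a b c p q r) (hF : Monotone (F + g)) (hg : Continuous g)
    (hK : ∀ x ∈ Ioo 0 (2 * p + q + r), |F x| ≤ K) : ∀ x ∈ Ioo 0 (2 * a + b + c), |F x| ≤ K := by
  have hCADBDA := S.symm_CADBDA R
  have hCA := S.symm_CA R
  have hDBA := S.symm_DBA R
  have hDB := S.symm_DB R
  have hC := S.symm_C
  have hD := S.symm_D
  obtain ⟨hp, hq, hr, rfl, rfl, rfl⟩ := R
  simp only [add_zero, mul_zero, sub_zero, neg_zero] at *
  have h1 : |(1 : ℝ)| = 1 := abs_one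
  have h2 : |(-1 : ℝ)| = 1 := by simp
  replace hK := hCADBDA.abs_le_extend h1 hF hg (by linarith) (by linarith) hK
  replace hK := hCA.abs_le_extend h2 hF hg (by linarith) (by linarith) hK
  replace hK := hDBA.abs_le_extend h1 hF hg (by linarith) (by linarith) hK
  replace hK := hDB.abs_le_extend h2 hF hg (by linarith) (by linarith) hK
  replace hK := hC.abs_le_extend h1 hF hg (by linarith) (by linarith) hK
  exact hD.abs_le_extend h2 hF hg (by linarith) (by linarith) hK

end IsExchangeSolution

theorem RenormalizesTo.const_mul {a b c p q r k : ℝ} (R : RenormalizesTo a b c p q r)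
    (hk : 0 < k) : RenormalizesTo (k * a) (k * b) (k * c) (k * p) (k * q) (k * r) where
  pos_p := mul_pos hk R.pos_p
  pos_q := mul_pos hk R.pos_q
  pos_r := mul_pos hk R.pos_r
  eq_a := by rw [R.eq_a]; ring
  eq_b := by rw [R.eq_b]; ring
  eq_c := by rw [R.eq_c]; ring

/-- The exchange with lengths `a, b, c, a` renormalizes to itself, scaled by `θ`. -/
structure IsSelfSimilar (θ a b c : ℝ) : Prop where
  pos : 0 < θ
  renormalizesTo : RenormalizesTo a b c (θ * a) (θ * b) (θ * c)

namespace IsSelfSimilar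

variable {θ a b c : ℝ} (E : IsSelfSimilar θ a b c)

include E

theorem pos_a : 0 < a := pos_of_mul_pos_right E.renormalizesTo.pos_p E.pos.le

theorem pos_b : 0 < b := pos_of_mul_pos_right E.renormalizesTo.pos_q E.pos.le

theorem pos_c : 0 < c := pos_of_mul_pos_right E.renormalizesTo.pos_r E.pos.le

theorem seven_mul_lt_one : 7 * θ < 1 := by
  obtain ⟨-, hq, hr, ha, -, -⟩ := E.renormalizesTo
  refine lt_of_mul_lt_mul_right ?_ E.pos_a.le
  linarith

theorem lt_one : θ < 1 := by
  linarith [E.pos, E.seven_mul_lt_one]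

theorem renormalizesTo_pow (n : ℕ) :
    RenormalizesTo (θ ^ n * a) (θ ^ n * b) (θ ^ n * c)
      (θ ^ (n + 1) * a) (θ ^ (n + 1) * b) (θ ^ (n + 1) * c) := by
  simpa only [pow_succ, mul_assoc] using E.renormalizesTo.const_mul (pow_pos E.pos n)

end IsSelfSimilar

/-- The `ℓ¹` norm of the cross product of `(a, b, c)` and `(α, β, γ)`, measuring how far the masses
`α, β, γ` are from being proportional to the lengths `a, b, c`. -/
def crossNorm (a b c α β γ : ℝ) : ℝ :=
  |α * b - β * a| + |β * c - γ * b| + |α * c - γ * a|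

theorem crossNorm_le {a b c α β γ K : ℝ} (ha : 0 ≤ a) (hb : 0 ≤ b) (hc : 0 ≤ c)
    (hα : |α| ≤ K) (hβ : |β| ≤ K) (hγ : |γ| ≤ K) :
    crossNorm a b c α β γ ≤ 2 * (a + b + c) * K := by
  have bound {x y u v : ℝ} (hx : |x| ≤ K) (hy : |y| ≤ K) (hu : 0 ≤ u) (hv : 0 ≤ v) :
      |x * v - y * u| ≤ K * v + K * u := by
    refine (abs_sub _ _).trans ?_
    rw [abs_mul, abs_mul, abs_of_nonneg hu, abs_of_nonneg hv]
    gcongr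
  unfold crossNorm
  linarith [bound hα hβ ha hb, bound hβ hγ hb hc, bound hα hγ ha hc]

theorem exists_eq_mul_of_crossNorm_nonpos {a b c α β γ : ℝ} (ha : a ≠ 0)
    (h : crossNorm a b c α β γ ≤ 0) : ∃ κ, α = κ * a ∧ β = κ * b ∧ γ = κ * c := by
  unfold crossNorm at h
  have hαβ : α * b - β * a = 0 := abs_nonpos_iff.1 (by
    linarith [abs_nonneg (β * c - γ * b), abs_nonneg (α * c - γ * a)])
  have hαγ : α * c - γ * a = 0 := abs_nonpos_iff.1 (by
    linarith [abs_nonneg (β * c - γ * b), abs_nonneg (α * b - β * a)])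
  refine ⟨α / a, ?_, ?_, ?_⟩ <;> field_simp <;> linarith

-- The `2 × 2` minors of the renormalization matrix have column sums at most `7 < θ⁻¹`.
theorem IsSelfSimilar.crossNorm_le_renormalize {θ a b c : ℝ} (E : IsSelfSimilar θ a b c)
    (α β γ : ℝ) :
    crossNorm a b c α β γ ≤ crossNorm a b c (α - β - γ) (4 * β - 2 * α - γ) (2 * γ - β) := by
  have hθ := E.pos
  have hθ7 := E.seven_mul_lt_one
  obtain ⟨-, -, -, ha, hb, hc⟩ := E.renormalizesTo
  unfold crossNorm
  set u := (α - β - γ) * b - (4 * β - 2 * α - γ) * a with hu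
  set v := (4 * β - 2 * α - γ) * c - (2 * γ - β) * b with hv
  set w := (α - β - γ) * c - (2 * γ - β) * a with hw
  have hαβ : α * b - β * a = θ * (2 * u + w - v) := by
    rw [hu, hv, hw]; linear_combination α * hb - β * ha
  have hβγ : β * c - γ * b = θ * (2 * w + v) := by
    rw [hv, hw]; linear_combination β * hc - γ * hb
  have hαγ : α * c - γ * a = θ * (u + 4 * w + v) := by
    rw [hu, hv, hw]; linear_combination α * hc - γ * ha
  have hu' := abs_le.1 (le_refl |u|)
  have hv' := abs_le.1 (le_refl |v|)
  have hw' := abs_le.1 (le_refl |w|)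
  have h₁ : |2 * u + w - v| ≤ 2 * |u| + |w| + |v| := by
    rw [abs_le]; constructor <;> linarith
  have h₂ : |2 * w + v| ≤ 2 * |w| + |v| := by
    rw [abs_le]; constructor <;> linarith
  have h₃ : |u + 4 * w + v| ≤ |u| + 4 * |w| + |v| := by
    rw [abs_le]; constructor <;> linarith
  calc |α * b - β * a| + |β * c - γ * b| + |α * c - γ * a|
      = θ * (|2 * u + w - v| + |2 * w + v| + |u + 4 * w + v|) := by
        rw [hαβ, hβγ, hαγ, abs_mul, abs_mul, abs_mul, abs_of_pos hθ]; ring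
    _ ≤ θ * (7 * (|u| + |v| + |w|)) := by
        gcongr
        linarith [abs_nonneg u, abs_nonneg v, abs_nonneg w]
    _ = (7 * θ) * (|u| + |v| + |w|) := by ring
    _ ≤ |u| + |v| + |w| := mul_le_of_le_one_left (by positivity) hθ7.le

theorem exists_forall_Ioo_pow_abs_le {F : ℝ → ℝ} (hF : Tendsto F (𝓝[>] 0) (𝓝 0)) {θ : ℝ}
    (hθ : 0 ≤ θ) (hθ1 : θ < 1) (l : ℝ) {ε : ℝ} (hε : 0 < ε) :
    ∃ n : ℕ, ∀ x ∈ Ioo 0 (θ ^ n * l), |F x| ≤ ε := by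
  have hsmall : {x | |F x| ≤ ε} ∈ 𝓝[>] 0 := by
    filter_upwards [hF (Metric.closedBall_mem_nhds 0 hε)] with x hx
    simpa using hx
  obtain ⟨u, hu, hsub⟩ := mem_nhdsGT_iff_exists_Ioo_subset.1 hsmall
  have hpow : Tendsto (fun n : ℕ ↦ θ ^ n * l) atTop (𝓝 0) := by
    simpa using (tendsto_pow_atTop_nhds_zero_of_lt_one hθ hθ1).mul_const l
  obtain ⟨n, hn⟩ := (hpow.eventually_lt_const hu).exists
  exact ⟨n, fun x hx ↦ hsub ⟨hx.1, hx.2.trans hn⟩⟩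

namespace IsExchangeSolution

variable {θ a b c α β γ δ : ℝ} {F : ℝ → ℝ}

theorem exists_renormalize_pow (S : IsExchangeSolution a b c α β γ δ F)
    (E : IsSelfSimilar θ a b c) (n : ℕ) :
    ∃ α' β' γ' δ',
      IsExchangeSolution (θ ^ n * a) (θ ^ n * b) (θ ^ n * c) α' β' γ' δ' F ∧ α - δ = α' - δ' ∧
        (α = δ → crossNorm a b c α β γ ≤ crossNorm a b c α' β' γ') := by
  induction n with
  | zero => exact ⟨α, β, γ, δ, by simpa using S, rfl, fun _ ↦ le_rfl⟩
  | succ n ih =>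
    obtain ⟨α', β', γ', δ', S', hsub, hcross⟩ := ih
    refine ⟨_, _, _, _, S'.renormalize (E.renormalizesTo_pow n), by linarith, fun h ↦ ?_⟩
    obtain rfl : α' = δ' := by linarith
    refine ((hcross h).trans (E.crossNorm_le_renormalize α' β' γ')).trans_eq ?_
    congr 1 <;> ring

theorem renormalize_pow_zero (S : IsExchangeSolution a b c 0 0 0 0 F)
    (E : IsSelfSimilar θ a b c) (n : ℕ) :
    IsExchangeSolution (θ ^ n * a) (θ ^ n * b) (θ ^ n * c) 0 0 0 0 F := by
  induction n with
  | zero => simpa using S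
  | succ n ih => simpa using ih.renormalize (E.renormalizesTo_pow n)

theorem abs_le_of_pow {g : ℝ → ℝ} {K : ℝ} (S : IsExchangeSolution a b c 0 0 0 0 F)
    (E : IsSelfSimilar θ a b c) (hF : Monotone (F + g)) (hg : Continuous g) (n : ℕ)
    (hK : ∀ x ∈ Ioo 0 (θ ^ n * (2 * a + b + c)), |F x| ≤ K) :
    ∀ x ∈ Ioo 0 (2 * a + b + c), |F x| ≤ K := by
  induction n with
  | zero => simpa using hK
  | succ n ih =>
    refine ih ?_
    convert (S.renormalize_pow_zero E n).abs_le_of_renormalizesTo (E.renormalizesTo_pow n)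
      hF hg ?_ using 4
    · ring
    · convert hK using 4
      ring

theorem eqOn_zero {g : ℝ → ℝ} (S : IsExchangeSolution a b c 0 0 0 0 F)
    (E : IsSelfSimilar θ a b c) (hF : Monotone (F + g)) (hg : Continuous g)
    (hF0 : Tendsto F (𝓝[>] 0) (𝓝 0)) : EqOn F 0 (Ioo 0 (2 * a + b + c)) := by
  intro x hx
  refine abs_nonpos_iff.1 (le_of_forall_pos_le_add fun ε hε ↦ ?_)
  obtain ⟨n, hn⟩ := exists_forall_Ioo_pow_abs_le hF0 E.pos.le E.lt_one (2 * a + b + c) hε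
  rw [zero_add]
  exact S.abs_le_of_pow E hF hg n hn x hx

theorem masses_eq_mul (S : IsExchangeSolution a b c α β γ δ F) (E : IsSelfSimilar θ a b c)
    (hF : Tendsto F (𝓝[>] 0) (𝓝 0)) : ∃ κ, α = κ * a ∧ β = κ * b ∧ γ = κ * c ∧ δ = κ * a := by
  have ha := E.pos_a
  have hb := E.pos_b
  have hc := E.pos_c
  have small (ε : ℝ) (hε : 0 < ε) : |α - δ| ≤ 16 * ε ∧
      (α = δ → crossNorm a b c α β γ ≤ 2 * (a + b + c) * (8 * ε)) := by
    obtain ⟨n, hn⟩ := exists_forall_Ioo_pow_abs_le hF E.pos.le E.lt_one (2 * a + b + c) hε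
    obtain ⟨α', β', γ', δ', S', hsub, hcross⟩ := S.exists_renormalize_pow E n
    have hθn := pow_pos E.pos n
    obtain ⟨hα, hβ, hγ, hδ⟩ := S'.abs_masses_le (mul_pos hθn ha) (mul_pos hθn hb)
      (mul_pos hθn hc) (K := ε) (by convert hn using 4; ring)
    refine ⟨?_, fun h ↦ (hcross h).trans (crossNorm_le ha.le hb.le hc.le hα hβ hγ)⟩
    rw [hsub]
    linarith [abs_sub α' δ']
  have hαδ : α = δ := by
    refine sub_eq_zero.1 (abs_nonpos_iff.1 (le_of_forall_pos_le_add fun ε hε ↦ ?_))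
    linarith [(small (ε / 16) (by positivity)).1]
  have hcross : crossNorm a b c α β γ ≤ 0 := by
    refine le_of_forall_pos_le_add fun ε hε ↦ ?_
    refine ((small (ε / (16 * (a + b + c))) (by positivity)).2 hαδ).trans_eq ?_
    field_simp
    ring
  obtain ⟨κ, hα, hβ, hγ⟩ := exists_eq_mul_of_crossNorm_nonpos ha.ne' hcross
  exact ⟨κ, hα, hβ, hγ, hαδ ▸ hα⟩

theorem exists_eq_mul (S : IsExchangeSolution a b c α β γ δ F) (E : IsSelfSimilar θ a b c)
    (hF : Monotone F) (hF0 : Tendsto F (𝓝[>] 0) (𝓝 0)) :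
    ∃ κ, ∀ x ∈ Ioo 0 (2 * a + b + c), F x = κ * x := by
  obtain ⟨κ, rfl, rfl, rfl, rfl⟩ := S.masses_eq_mul E hF0
  have hlin : Continuous fun x : ℝ ↦ κ * x := by fun_prop
  refine ⟨κ, fun x hx ↦ sub_eq_zero.1 (S.sub_mul.eqOn_zero E (g := fun x ↦ κ * x) ?_ hlin ?_ hx)⟩
  · convert hF
    ext x
    simp
  · simpa using hF0.sub ((hlin.tendsto 0).mono_left nhdsWithin_le_nhds)

end IsExchangeSolution

section MidCdf

variable {μ : Measure ℝ}

/-- The distribution function of `μ`, symmetrized at its jumps so that it is compatible with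
flips. -/
noncomputable def midCdf (μ : Measure ℝ) (x : ℝ) : ℝ :=
  (Function.leftLim (cdf μ) x + cdf μ x) / 2

theorem monotone_midCdf (μ : Measure ℝ) : Monotone (midCdf μ) := fun _ _ h ↦
  div_le_div_of_nonneg_right (add_le_add ((monotone_cdf μ).leftLim h) (monotone_cdf μ h))
    zero_le_two

theorem tendsto_midCdf_nhdsGT (μ : Measure ℝ) (x : ℝ) :
    Tendsto (midCdf μ) (𝓝[>] x) (𝓝 (cdf μ x)) := by
  have hcdf : Tendsto (cdf μ) (𝓝[>] x) (𝓝 (cdf μ x)) :=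
    ((cdf μ).right_continuous x).mono_left (nhdsWithin_mono x Ioi_subset_Ici_self)
  refine tendsto_of_tendsto_of_tendsto_of_le_of_le' tendsto_const_nhds hcdf ?_ ?_
  · filter_upwards [self_mem_nhdsWithin] with y (hy : x < y)
    have := (monotone_cdf μ).le_leftLim hy
    have := monotone_cdf μ hy.le
    unfold midCdf
    linarith
  · filter_upwards with y
    have := (monotone_cdf μ).leftLim_le (le_refl y)
    unfold midCdf
    linarith

theorem cdf_eq_midCdf_of_continuousAt {x : ℝ} (h : ContinuousAt (midCdf μ) x) :
    cdf μ x = midCdf μ x :=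
  tendsto_nhds_unique (tendsto_midCdf_nhdsGT μ x) (h.mono_left nhdsWithin_le_nhds)

theorem continuousAt_midCdf_of_eq_mul {L κ x : ℝ} (h : ∀ x ∈ Ioo 0 L, midCdf μ x = κ * x)
    (hx : x ∈ Ioo 0 L) : ContinuousAt (midCdf μ) x := by
  refine (continuous_const_mul κ).continuousAt.congr ?_
  filter_upwards [Ioo_mem_nhds hx.1 hx.2] with y hy
  exact (h y hy).symm

variable [IsProbabilityMeasure μ]

theorem measure_singleton_eq_cdf_sub_leftLim (x : ℝ) :
    μ {x} = ENNReal.ofReal (cdf μ x - Function.leftLim (cdf μ) x) := by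
  conv_lhs => rw [← measure_cdf μ, StieltjesFunction.measure_singleton]

theorem measure_singleton_eq_zero_iff_leftLim_eq_cdf {x : ℝ} :
    μ {x} = 0 ↔ Function.leftLim (cdf μ) x = cdf μ x := by
  rw [measure_singleton_eq_cdf_sub_leftLim, ENNReal.ofReal_eq_zero, sub_nonpos]
  exact ⟨fun h ↦ ((monotone_cdf μ).leftLim_le le_rfl).antisymm h, fun h ↦ h.ge⟩

theorem measure_singleton_eq_zero_of_continuousAt_midCdf {x : ℝ}
    (h : ContinuousAt (midCdf μ) x) : μ {x} = 0 := by
  rw [measure_singleton_eq_zero_iff_leftLim_eq_cdf]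
  linarith [cdf_eq_midCdf_of_continuousAt h, midCdf.eq_def μ x]

theorem midCdf_sub_midCdf {u v : ℝ} (h : u < v) :
    midCdf μ v - midCdf μ u = μ.real (Ioo u v) + (μ.real {u} + μ.real {v}) / 2 := by
  have singleton (x : ℝ) : μ.real {x} = cdf μ x - Function.leftLim (cdf μ) x := by
    rw [measureReal_def, measure_singleton_eq_cdf_sub_leftLim,
      ENNReal.toReal_ofReal (sub_nonneg.2 ((monotone_cdf μ).leftLim_le le_rfl))]
  have hIoo : μ.real (Ioo u v) = Function.leftLim (cdf μ) v - cdf μ u := by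
    conv_lhs => rw [measureReal_def, ← measure_cdf μ, StieltjesFunction.measure_Ioo]
    exact ENNReal.toReal_ofReal (sub_nonneg.2 ((monotone_cdf μ).le_leftLim h))
  rw [singleton, singleton, hIoo, midCdf, midCdf]
  ring

omit [IsProbabilityMeasure μ] in
theorem measure_preimage_const_sub {T : ℝ → ℝ} {s t k : ℝ} (hT : MeasurePreserving T μ μ)
    (hflip : ∀ x ∈ Ioo s t, T x = k - x) (hinj : ∀ᵐ x ∂μ, T x ∈ Ioo (k - t) (k - s) → x ∈ Ioo s t)
    {E : Set ℝ} (hE : MeasurableSet E) (hsub : E ⊆ Ioo s t) :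
    μ ((fun x ↦ k - x) ⁻¹' E) = μ E := by
  have hE' : MeasurableSet ((fun x ↦ k - x) ⁻¹' E) := hE.preimage (by fun_prop)
  rw [← hT.measure_preimage hE'.nullMeasurableSet]
  refine measure_congr ?_
  filter_upwards [hinj] with x hx
  refine propext ⟨fun h : k - T x ∈ E ↦ ?_, fun h : x ∈ E ↦ ?_⟩
  · have hTx := hsub h
    have hxst := hx ⟨by linarith [hTx.2], by linarith [hTx.1]⟩
    rwa [hflip x hxst, sub_sub_cancel] at h
  · change k - T x ∈ E
    rwa [hflip x (hsub h), sub_sub_cancel]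

theorem exists_localSymm_midCdf_of_flip {T : ℝ → ℝ} {s t k : ℝ} (hT : MeasurePreserving T μ μ)
    (hflip : ∀ x ∈ Ioo s t, T x = k - x)
    (hinj : ∀ᵐ x ∂μ, T x ∈ Ioo (k - t) (k - s) → x ∈ Ioo s t) :
    ∃ m, LocalSymm (midCdf μ) s t (-1) k m := by
  have hμ {E : Set ℝ} (hE : MeasurableSet E) (hsub : E ⊆ Ioo s t) :
      μ.real ((fun x ↦ k - x) ⁻¹' E) = μ.real E := by
    simp only [measureReal_def, measure_preimage_const_sub hT hflip hinj hE hsub]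
  have hsingleton {x : ℝ} (hx : x ∈ Ioo s t) : μ.real {k - x} = μ.real {x} := by
    have hpre : (fun y ↦ k - y) ⁻¹' {x} = {k - x} := by
      ext y
      exact sub_eq_iff_eq_add.trans (eq_sub_iff_add_eq'.trans eq_comm).symm
    rw [← hpre, hμ (measurableSet_singleton x) (singleton_subset_iff.2 hx)]
  have add_eq {u v : ℝ} (hu : u ∈ Ioo s t) (hv : v ∈ Ioo s t) (huv : u < v) :
      midCdf μ (k - u) + midCdf μ u = midCdf μ (k - v) + midCdf μ v := by
    have h := midCdf_sub_midCdf (μ := μ) huv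
    have h' := midCdf_sub_midCdf (μ := μ) (sub_lt_sub_left huv k)
    rw [← preimage_const_sub_Ioo, hμ measurableSet_Ioo (Ioo_subset_Ioo hu.1.le hv.2.le),
      hsingleton hu, hsingleton hv] at h'
    linarith
  refine ⟨midCdf μ (k - (s + t) / 2) + midCdf μ ((s + t) / 2), fun x hx ↦ ?_⟩
  have hmid : (s + t) / 2 ∈ Ioo s t := ⟨by linarith [hx.1, hx.2], by linarith [hx.1, hx.2]⟩
  suffices midCdf μ (k - x) + midCdf μ x
      = midCdf μ (k - (s + t) / 2) + midCdf μ ((s + t) / 2) by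
    rw [neg_one_mul, neg_one_mul, neg_add_eq_sub]
    linarith
  rcases lt_trichotomy x ((s + t) / 2) with h | h | h
  · exact add_eq hx hmid h
  · rw [h]
  · exact (add_eq hmid hx h).symm

theorem cdf_eq_inv_mul_of_midCdf_eq_mul {L κ : ℝ} (hL : 0 < L)
    (hF : ∀ x ∈ Ioo 0 L, midCdf μ x = κ * x) (h0 : cdf μ 0 = 0) (hL1 : cdf μ L = 1)
    (hatom : μ {L} = 0) : ∀ x ∈ Icc 0 L, cdf μ x = L⁻¹ * x := by
  have hcdf (x : ℝ) (hx : x ∈ Ioo 0 L) : cdf μ x = κ * x := by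
    rw [cdf_eq_midCdf_of_continuousAt (continuousAt_midCdf_of_eq_mul hF hx), hF x hx]
  have hlim : Tendsto (cdf μ) (𝓝[<] L) (𝓝 (κ * L)) := by
    refine Tendsto.congr' (f₁ := fun x ↦ κ * x) ?_
      ((continuous_const_mul κ).tendsto L |>.mono_left nhdsWithin_le_nhds)
    filter_upwards [Ioo_mem_nhdsLT hL] with x hx
    exact (hcdf x hx).symm
  have hκ : κ = L⁻¹ := by
    refine eq_inv_of_mul_eq_one_left ?_
    rw [← hL1, ← measure_singleton_eq_zero_iff_leftLim_eq_cdf.1 hatom]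
    exact tendsto_nhds_unique hlim ((monotone_cdf μ).tendsto_leftLim L)
  rintro x ⟨hx0, hxL⟩
  rcases hx0.eq_or_lt with rfl | hx0
  · rw [h0, mul_zero]
  rcases hxL.eq_or_lt with rfl | hxL
  · rw [hL1, inv_mul_cancel₀ hL.ne']
  · rw [hcdf x ⟨hx0, hxL⟩, hκ]

theorem eq_smul_volume_restrict_of_cdf_eq {L : ℝ} (hL : 0 < L)
    (h : ∀ x ∈ Icc 0 L, cdf μ x = L⁻¹ * x) :
    μ = ENNReal.ofReal L⁻¹ • volume.restrict (Icc 0 L) := by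
  refine Measure.ext_of_Iic _ _ fun x ↦ ?_
  have hIcc : Icc 0 L ∩ Iic x = Icc 0 (min L x) := by
    ext y
    simp only [mem_inter_iff, mem_Icc, mem_Iic, le_min_iff, and_assoc]
  rw [Measure.smul_apply, Measure.restrict_apply measurableSet_Iic, smul_eq_mul, inter_comm,
    hIcc, Real.volume_Icc, sub_zero, ← ENNReal.ofReal_mul (by positivity), ← ofReal_cdf]
  rcases lt_or_ge x 0 with hx0 | hx0
  · have hcdf : cdf μ x ≤ 0 := by
      simpa using (monotone_cdf μ hx0.le).trans_eq (h 0 ⟨le_rfl, hL.le⟩)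
    rw [ENNReal.ofReal_of_nonpos hcdf, ENNReal.ofReal_of_nonpos]
    exact mul_nonpos_of_nonneg_of_nonpos (by positivity) ((min_le_right _ _).trans hx0.le)
  rcases le_total x L with hxL | hxL
  · rw [min_eq_right hxL, h x ⟨hx0, hxL⟩]
  · rw [min_eq_left hxL, ← h L ⟨hL.le, le_rfl⟩]
    have hcdf : cdf μ L = 1 := by rw [h L ⟨hL.le, le_rfl⟩, inv_mul_cancel₀ hL.ne']
    rw [(monotone_cdf μ hxL).antisymm' ((cdf_le_one μ x).trans_eq hcdf.symm)]

end MidCdf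

/-- The exchange of four consecutive intervals of lengths `l₁, l₂, l₃, l₄` which flips all of them
and rearranges them in the order `3, 1, 4, 2`. -/
noncomputable def flippedExchange (l₁ l₂ l₃ l₄ x : ℝ) : ℝ :=
  if x < l₁ then -x + l₁ + l₃
  else if x < l₁ + l₂ then -x + l₁ + (l₁ + l₂ + l₃ + l₄)
  else if x < l₁ + l₂ + l₃ then -x + l₁ + l₂ + l₃
  else -x + l₁ + l₃ + (l₁ + l₂ + l₃ + l₄)

namespace flippedExchange

theorem measurable (l₁ l₂ l₃ l₄ : ℝ) : Measurable (flippedExchange l₁ l₂ l₃ l₄) :=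
  Measurable.ite measurableSet_Iio (by fun_prop) <| Measurable.ite measurableSet_Iio (by fun_prop)
    <| Measurable.ite measurableSet_Iio (by fun_prop) (by fun_prop)

variable {l₁ l₂ l₃ l₄ : ℝ} {μ : Measure ℝ} [IsProbabilityMeasure μ]
  (hμ : ∀ᵐ x ∂μ, x ∈ Icc 0 (l₁ + l₂ + l₃ + l₄))
  (hT : MeasurePreserving (flippedExchange l₁ l₂ l₃ l₄) μ μ)

include hμ hT

theorem exists_localSymm_first (h₄ : 0 ≤ l₄) :
    ∃ k, LocalSymm (midCdf μ) 0 l₁ (-1) (l₁ + l₃) k := by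
  refine exists_localSymm_midCdf_of_flip hT ?_ ?_
  · rintro x ⟨-, hx⟩
    rw [flippedExchange, if_pos hx]
    ring
  · filter_upwards [hμ] with x ⟨_, hxL⟩
    rw [flippedExchange]
    split_ifs <;> rintro ⟨hl, hr⟩ <;> constructor <;> linarith

theorem exists_localSymm_second (h₁ : 0 ≤ l₁) (h₄ : 0 ≤ l₄) :
    ∃ k, LocalSymm (midCdf μ) l₁ (l₁ + l₂) (-1) (2 * l₁ + l₂ + l₃ + l₄) k := by
  refine exists_localSymm_midCdf_of_flip hT ?_ ?_
  · rintro x ⟨hx, hx'⟩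
    rw [flippedExchange, if_neg hx.not_gt, if_pos hx']
    ring
  · filter_upwards [hμ] with x ⟨hx0, _⟩
    rw [flippedExchange]
    split_ifs <;> rintro ⟨hl, hr⟩ <;> constructor <;> linarith

theorem exists_localSymm_third (h₁ : 0 ≤ l₁) (h₂ : 0 ≤ l₂) (h₄ : 0 ≤ l₄) :
    ∃ k, LocalSymm (midCdf μ) (l₁ + l₂) (l₁ + l₂ + l₃) (-1) (l₁ + l₂ + l₃) k := by
  refine exists_localSymm_midCdf_of_flip hT ?_ ?_
  · rintro x ⟨hx, hx'⟩
    rw [flippedExchange, if_neg (by linarith), if_neg hx.not_gt, if_pos hx']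
    ring
  · filter_upwards [hμ] with x ⟨_, hxL⟩
    rw [flippedExchange]
    split_ifs <;> rintro ⟨_, hr⟩ <;> constructor <;> linarith

theorem exists_localSymm_fourth (h₁ : 0 ≤ l₁) (h₂ : 0 ≤ l₂) (h₃ : 0 ≤ l₃) :
    ∃ k, LocalSymm (midCdf μ) (l₁ + l₂ + l₃) (l₁ + l₂ + l₃ + l₄) (-1)
      (2 * l₁ + l₂ + 2 * l₃ + l₄) k := by
  refine exists_localSymm_midCdf_of_flip hT ?_ ?_
  · rintro x ⟨hx, -⟩
    rw [flippedExchange, if_neg (by linarith), if_neg (by linarith), if_neg hx.not_gt]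
    ring
  · filter_upwards [hμ] with x ⟨hx0, _⟩
    rw [flippedExchange]
    split_ifs <;> rintro ⟨hl, hr⟩ <;> constructor <;> linarith

theorem cdf_zero (h₁ : 0 < l₁) (h₃ : 0 < l₃) (h₄ : 0 < l₄) : cdf μ 0 = 0 := by
  have hatom : μ {0} = 0 := by
    rw [← hT.measure_preimage (measurableSet_singleton 0).nullMeasurableSet]
    refine measure_eq_zero_iff_ae_notMem.2 ?_
    filter_upwards [hμ] with x ⟨_, hxL⟩ (h : flippedExchange l₁ l₂ l₃ l₄ x = 0)
    rw [flippedExchange] at h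
    split_ifs at h <;> linarith
  have hIic : μ (Iic 0) = 0 := by
    refine measure_eq_zero_iff_ae_notMem.2 ?_
    filter_upwards [hμ, measure_eq_zero_iff_ae_notMem.1 hatom] with x hx hne hle
    exact hne (le_antisymm hle hx.1)
  rw [cdf_eq_real, measureReal_def, hIic, ENNReal.toReal_zero]

omit [IsProbabilityMeasure μ] hμ in
theorem measure_singleton_total_le (h₂ : 0 ≤ l₂) (h₃ : 0 ≤ l₃) (h₄ : 0 ≤ l₄) :
    μ {l₁ + l₂ + l₃ + l₄} ≤ μ {l₁ + l₃} := by
  rw [← hT.measure_preimage (measurableSet_singleton (l₁ + l₃)).nullMeasurableSet]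
  refine measure_mono (singleton_subset_iff.2 ?_)
  change flippedExchange l₁ l₂ l₃ l₄ _ = l₁ + l₃
  rw [flippedExchange, if_neg (by linarith), if_neg (by linarith), if_neg (by linarith)]
  ring

end flippedExchange

theorem IsSelfSimilar.exists_midCdf_eq_mul {θ a b c : ℝ} (E : IsSelfSimilar θ a b c)
    {μ : Measure ℝ} [IsProbabilityMeasure μ] (hμ : ∀ᵐ x ∂μ, x ∈ Icc 0 (a + (b + c) + (a + c) + b))
    (hT : MeasurePreserving (flippedExchange a (b + c) (a + c) b) μ μ) :
    ∃ κ, ∀ x ∈ Ioo 0 (a + (b + c) + (a + c) + b), midCdf μ x = κ * x := by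
  have ha := E.pos_a
  have hb := E.pos_b
  have hc := E.pos_c
  have hbc := add_pos hb hc
  have hac := add_pos ha hc
  obtain ⟨k₁, h₁⟩ := flippedExchange.exists_localSymm_first hμ hT hb.le
  obtain ⟨k₂, h₂⟩ := flippedExchange.exists_localSymm_second hμ hT ha.le hb.le
  obtain ⟨k₃, h₃⟩ := flippedExchange.exists_localSymm_third hμ hT ha.le hbc.le hb.le
  obtain ⟨k₄, h₄⟩ := flippedExchange.exists_localSymm_fourth hμ hT ha.le hbc.le hac.le
  have S : IsExchangeSolution a b c (k₁ + k₂ - k₄) (k₄ - k₃ - k₁) (2 * k₃ - k₄)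
      (2 * k₄ - k₂ - 2 * k₃) (midCdf μ) := by
    constructor
    · convert h₁ using 1 <;> ring
    · exact h₄.comp h₂
    · exact h₃.comp h₂
    · convert h₃.mono (t' := 2 * a + b + c) le_rfl (by linarith) using 1 <;> ring
  have h0 : Tendsto (midCdf μ) (𝓝[>] 0) (𝓝 0) := by
    simpa only [flippedExchange.cdf_zero hμ hT ha hac hb] using tendsto_midCdf_nhdsGT μ 0
  obtain ⟨κ, hκ⟩ := S.exists_eq_mul E (monotone_midCdf μ) h0
  have hκ' := h₃.eq_mul_extend hκ (by linarith) (by linarith) (by linarith) (by linarith)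
    (by linarith)
  have := h₂.flip_symm.eq_mul_extend hκ' (by linarith) (by linarith) (by linarith) (by linarith)
    (by linarith)
  exact ⟨κ, fun x hx ↦ this x ⟨hx.1, by linarith [hx.2]⟩⟩

theorem IsSelfSimilar.eq_smul_volume_restrict {θ a b c : ℝ} (E : IsSelfSimilar θ a b c)
    {μ : Measure ℝ} [IsProbabilityMeasure μ] (hμ : ∀ᵐ x ∂μ, x ∈ Icc 0 (a + (b + c) + (a + c) + b))
    (hT : MeasurePreserving (flippedExchange a (b + c) (a + c) b) μ μ) :
    μ = ENNReal.ofReal (a + (b + c) + (a + c) + b)⁻¹ •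
      volume.restrict (Icc 0 (a + (b + c) + (a + c) + b)) := by
  have ha := E.pos_a
  have hb := E.pos_b
  have hc := E.pos_c
  obtain ⟨κ, hκ⟩ := E.exists_midCdf_eq_mul hμ hT
  have hcdf1 : cdf μ (a + (b + c) + (a + c) + b) = 1 := by
    rw [cdf_eq_real, measureReal_def, (mem_ae_iff_prob_eq_one measurableSet_Iic).1,
      ENNReal.toReal_one]
    filter_upwards [hμ] with x hx using hx.2
  have hatom : μ {a + (b + c) + (a + c) + b} = 0 := by
    refine nonpos_iff_eq_zero.1 ((flippedExchange.measure_singleton_total_le hT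
      (by positivity) (by positivity) hb.le).trans_eq ?_)
    exact measure_singleton_eq_zero_of_continuousAt_midCdf
      (continuousAt_midCdf_of_eq_mul hκ ⟨by positivity, by linarith⟩)
  have hL : 0 < a + (b + c) + (a + c) + b := by positivity
  exact eq_smul_volume_restrict_of_cdf_eq hL (cdf_eq_inv_mul_of_midCdf_eq_mul hL hκ
    (flippedExchange.cdf_zero hμ hT ha (add_pos ha hc) hb) hcdf1 hatom)

theorem perronRoot_bounds {η : ℝ} (hη : η ^ 3 - 11 * η ^ 2 + 7 * η - 1 = 0) (hη10 : 10 < η) :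
    10.3318 < η ∧ η < 10.3319 := by
  have : (η - 10) ^ 3 + 19 * (η - 10) ^ 2 + 87 * (η - 10) = 31 := by linear_combination hη
  constructor <;> by_contra! h
  · have : 0 ≤ η - 10 := by linarith
    have h2 : (η - 10) ^ 2 ≤ 0.3318 ^ 2 := by gcongr; linarith
    have h3 : (η - 10) ^ 3 ≤ 0.3318 ^ 3 := by gcongr; linarith
    linarith
  · have h2 : 0.3319 ^ 2 ≤ (η - 10) ^ 2 := by gcongr; linarith
    have h3 : 0.3319 ^ 3 ≤ (η - 10) ^ 3 := by gcongr; linarith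
    linarith

theorem isSelfSimilar_perronRoot {η : ℝ} (hη : η ^ 3 - 11 * η ^ 2 + 7 * η - 1 = 0)
    (hη10 : 10 < η) :
    IsSelfSimilar η⁻¹ ((-3 * η ^ 2 + 32 * η - 9) / 4) ((5 * η ^ 2 - 54 * η + 25) / 4)
      ((η ^ 2 - 10 * η - 3) / 4) := by
  obtain ⟨lo, hi⟩ := perronRoot_bounds hη hη10
  have hη0 : 0 < η⁻¹ := by positivity
  have hlohi := mul_pos (sub_pos.2 lo) (sub_pos.2 hi)
  have hlolo := mul_pos (sub_pos.2 lo) (sub_pos.2 lo)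
  refine ⟨hη0, mul_pos hη0 ?_, mul_pos hη0 ?_, mul_pos hη0 ?_, ?_, ?_, ?_⟩
  · nlinarith
  · nlinarith
  · nlinarith
  · field_simp
    linear_combination -3 * hη
  · field_simp
    linear_combination 5 * hη
  · field_simp
    linear_combination hη

/-- Theorem 2.1 (unique ergodicity part): the normalized Lebesgue measure on
`[0, |λ|]` is the only `T`-invariant Borel probability measure. -/
theorem T_uniquely_ergodic
    (η : ℝ) (hη : η ^ 3 - 11 * η ^ 2 + 7 * η - 1 = 0) (hη10 : 10 < η) :
    let l1 : ℝ := (-3 * η ^ 2 + 32 * η - 9) / 4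
    let l2 : ℝ := (6 * η ^ 2 - 64 * η + 22) / 4
    let l3 : ℝ := (-2 * η ^ 2 + 22 * η - 12) / 4
    let l4 : ℝ := (5 * η ^ 2 - 54 * η + 25) / 4
    let L : ℝ := l1 + l2 + l3 + l4
    let T : ℝ → ℝ := fun x =>
      if x < l1 then -x + l1 + l3
      else if x < l1 + l2 then -x + l1 + L
      else if x < l1 + l2 + l3 then -x + l1 + l2 + l3
      else -x + l1 + l3 + L
    ∀ μ : Measure ℝ, IsProbabilityMeasure μ →
      μ (Set.Icc 0 L) = 1 →
      (∀ s : Set ℝ, MeasurableSet s → μ (T ⁻¹' s) = μ s) →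
      μ = ENNReal.ofReal L⁻¹ • volume.restrict (Set.Icc 0 L) := by
  intro l1 l2 l3 l4 L T μ _ hμ hT
  have hl2 : l2 = l4 + (η ^ 2 - 10 * η - 3) / 4 := by ring
  have hl3 : l3 = l1 + (η ^ 2 - 10 * η - 3) / 4 := by ring
  have E : IsSelfSimilar η⁻¹ l1 l4 ((η ^ 2 - 10 * η - 3) / 4) := isSelfSimilar_perronRoot hη hη10
  have hT' : MeasurePreserving (flippedExchange l1 l2 l3 l4) μ μ :=
    have hmeas := flippedExchange.measurable l1 l2 l3 l4
    ⟨hmeas, Measure.ext fun s hs ↦ (Measure.map_apply hmeas hs).trans (hT s hs)⟩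
  have hμ' : ∀ᵐ x ∂μ, x ∈ Icc 0 (l1 + l2 + l3 + l4) :=
    (mem_ae_iff_prob_eq_one measurableSet_Icc).2 hμ
  rw [hl2, hl3] at hT' hμ'
  have := E.eq_smul_volume_restrict hμ' hT'
  rwa [← hl2, ← hl3] at this
end
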